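/- arXiv:1309.7593 — 3 statements merged into one kernel-verified Lean document; each statement's English description precedes it below -/
import Mathlib

section
/- Let f: [0,1] → [0,1] be a multimodal map of class C^3 with non-flat critical points, with all periodic points hyperbolic repelling, and topologically exact, and let μ_f be its maximal entropy measure (non-atomic, with full support, and with constant Jacobian exp(h_top(f))). If μ_f is doubling, then for each M' > 1 there is ε > 0 such that for each pair of adjacent subintervals L and R of [0,1] with |L| ≥ ε|R|, one has μ_f(L) ≥ M' μ_f(R). -/
/-! The statement is reverse doubling for a doubling measure on an interval. If `R` is a single
point then `μ R = 0`, since `μ` has no atoms. Otherwise enlarge `R` to `[a, a + d]` and let `L` lie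
to its left.
For `T ≥ d`, the interval `(a - 2T, a - T)` is the ball of radius `T / 2` about `a - 3T / 2`, and
the ball of radius `4T` about the same point contains `[a - T, a + d]`. Three applications of
doubling therefore give `μ [a - 2T, a + d] ≥ (1 + C⁻³) μ [a - T, a + d]`. Iterating over
`T = d, 2d, 4d, …` gives `μ [a - 2ⁿ d, a + d] ≥ (1 + C⁻³)ⁿ μ [a, a + d]`
(`one_add_pow_mul_real_le`), and `n` is chosen so that the factor exceeds `M' + 1`. Since `|L| ≤ 1`,
a large `ε` also forces `2ⁿ d` below the scale at which doubling holds. The case of `L` on the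
right follows by applying this to the image of `μ` under `x ↦ 1 - x`. -/

open Set MeasureTheory Metric Filter

noncomputable section

/-- The unit interval as a subset of `ℝ`. -/
def unitI : Set ℝ := Set.Icc 0 1

/-- The ball of `I` centered at `x` of radius `r`. -/
def ballI (x r : ℝ) : Set ℝ := {y ∈ unitI | |x - y| < r}

/-- `f` is a multimodal map of the unit interval: continuous, non-injective,
and there is a finite partition of `I` into intervals on each of which `f` is injective. -/
def Multimodal (f : ℝ → ℝ) : Prop :=
  ContinuousOn f unitI ∧ Set.MapsTo f unitI unitI ∧ ¬ Set.InjOn f unitI ∧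
    ∃ (n : ℕ) (J : Fin n → Set ℝ), (∀ i, (J i).OrdConnected) ∧ (⋃ i, J i) = unitI ∧
      Pairwise (Function.onFun Disjoint J) ∧ ∀ i, Set.InjOn f (J i)

/-- `f` is topologically exact on the unit interval. -/
def TopExact (f : ℝ → ℝ) : Prop :=
  ∀ U : Set ℝ, U.Nonempty → U ⊆ unitI → (∃ V : Set ℝ, IsOpen V ∧ U = V ∩ unitI) →
    ∃ n : ℕ, 1 ≤ n ∧ f^[n] '' U = unitI

/-- The set of critical points of `f` in the unit interval. -/
def Crit (f : ℝ → ℝ) : Set ℝ := {x ∈ unitI | deriv f x = 0}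

/-- The set of turning points of `f`: points of `I` at which `f` is not locally injective. -/
def TurnPts (f : ℝ → ℝ) : Set ℝ :=
  {x ∈ unitI | ∀ ε > 0, ¬ Set.InjOn f (ballI x ε)}

/-- A `C^3` diffeomorphism of `ℝ`. -/
def IsC3Diffeo (φ : ℝ → ℝ) : Prop :=
  ContDiff ℝ 3 φ ∧ Function.Bijective φ ∧ ∀ x : ℝ, deriv φ x ≠ 0

/-- `f` is non-flat at `c` with exponent `ℓc`. -/
def NonflatAt (f : ℝ → ℝ) (ℓc : ℝ) (c : ℝ) : Prop :=
  1 < ℓc ∧ ∃ φ ψ : ℝ → ℝ, IsC3Diffeo φ ∧ IsC3Diffeo ψ ∧ φ c = 0 ∧ ψ (f c) = 0 ∧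
    ∃ U ∈ nhdsWithin c unitI, ∀ x ∈ U, |ψ (f x)| = |φ x| ^ ℓc

/-- `f` is of class `C^3` with non-flat critical points, with exponents given by `ℓ`. -/
def C3NonflatWith (f : ℝ → ℝ) (ℓ : ℝ → ℝ) : Prop :=
  ContDiffOn ℝ 1 f unitI ∧ ContDiffOn ℝ 3 f (unitI \ Crit f) ∧
    ∀ c ∈ Crit f, NonflatAt f (ℓ c) c

/-- `f` is of class `C^3` with non-flat critical points. -/
def C3Nonflat (f : ℝ → ℝ) : Prop := ∃ ℓ : ℝ → ℝ, C3NonflatWith f ℓ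

/-- All periodic points of `f` are hyperbolic repelling. -/
def AllPeriodicRepelling (f : ℝ → ℝ) : Prop :=
  ∀ p ∈ unitI, ∀ n : ℕ, 1 ≤ n → f^[n] p = p → 1 < |deriv (f^[n]) p|

/-- The criticality of `f^m` at `x` with respect to `r`: the number of `j < m` such that
the connected component of `f^{-(m-j)}(B(f^m(x),r) ∩ I)` containing `f^j(x)` meets the
set of turning points. -/
def criticality (f : ℝ → ℝ) (m : ℕ) (x r : ℝ) : ℕ :=
  Nat.card {j : ℕ // j < m ∧
    (connectedComponentIn (unitI ∩ f^[m - j] ⁻¹' ballI (f^[m] x) r) (f^[j] x) ∩ TurnPts f).Nonempty}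

/-- `f` is semi-hyperbolic. -/
def SemiHyperbolic (f : ℝ → ℝ) : Prop :=
  ∃ r : ℝ, 0 < r ∧ ∃ D : ℕ, 1 ≤ D ∧ ∀ x ∈ unitI, ∀ n : ℕ, 1 ≤ n → criticality f n x r ≤ D

/-- `c` is a recurrent point of `f`: `c` belongs to the set of accumulation points of
its forward orbit. -/
def RecurrentPt (f : ℝ → ℝ) (c : ℝ) : Prop :=
  ∀ ε > 0, ∀ N : ℕ, ∃ n : ℕ, N ≤ n ∧ |f^[n] c - c| < ε

/-- A Borel measure on the unit interval is doubling. -/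
def DoublingOn (μ : Measure ℝ) : Prop :=
  ∃ C : ℝ, 0 < C ∧ ∃ r₀ : ℝ, 0 < r₀ ∧ ∀ x ∈ unitI, ∀ r : ℝ, 0 < r → r < r₀ →
    μ (ballI x (2 * r)) ≤ ENNReal.ofReal C * μ (ballI x r)

/-- A homeomorphism of the unit interval is quasi-symmetric. -/
def QuasiSymmetricOn (h : ℝ → ℝ) : Prop :=
  ∃ K : ℝ, 1 ≤ K ∧ ∀ x ∈ unitI, ∀ ε : ℝ, 0 < ε → x + ε ∈ unitI → x - ε ∈ unitI →
    |h (x + ε) - h x| ≤ K * |h x - h (x - ε)| ∧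
    |h x - h (x - ε)| ≤ K * |h (x + ε) - h x|

/-- `F` is piecewise affine on the unit interval with slope `±s` everywhere. -/
def PiecewiseAffineSlope (F : ℝ → ℝ) (s : ℝ) : Prop :=
  ∃ (n : ℕ) (a : Fin (n + 1) → ℝ), a 0 = 0 ∧ a (Fin.last n) = 1 ∧ StrictMono a ∧
    ∀ i : Fin n, ∃ b σ : ℝ, (σ = 1 ∨ σ = -1) ∧
      ∀ x ∈ Set.Icc (a i.castSucc) (a i.succ), F x = σ * s * x + b

/-- `f` is quasi-symmetrically conjugate to a piecewise affine map of the unit interval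
with slope `±s` everywhere. -/
def QSConjPiecewiseAffine (f : ℝ → ℝ) (s : ℝ) : Prop :=
  ∃ h F : ℝ → ℝ, ContinuousOn h unitI ∧ Set.BijOn h unitI unitI ∧ QuasiSymmetricOn h ∧
    Set.MapsTo F unitI unitI ∧ PiecewiseAffineSlope F s ∧ ∀ x ∈ unitI, h (f x) = F (h x)

/-- The topological entropy of `f` on the unit interval (Bowen's definition). -/
def htop (f : ℝ → ℝ) : ℝ := (Dynamics.coverEntropy f unitI).toReal

/-- `μ` is an `f`-invariant Borel probability measure on the unit interval which is
non-atomic, has topological support equal to the unit interval, and has constant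
Jacobian `s`; for a topologically exact multimodal map this characterizes the unique
measure of maximal entropy when `s = exp (htop f)`. -/
def IsMaxEntropyLike (f : ℝ → ℝ) (μ : Measure ℝ) (s : ℝ) : Prop :=
  IsProbabilityMeasure μ ∧ μ unitIᶜ = 0 ∧
    (∀ A : Set ℝ, MeasurableSet A → μ (f ⁻¹' A) = μ A) ∧
    (∀ x : ℝ, μ {x} = 0) ∧
    (∀ x ∈ unitI, ∀ r : ℝ, 0 < r → 0 < μ (ballI x r)) ∧
    (∀ A : Set ℝ, MeasurableSet A → A ⊆ unitI → Set.InjOn f A →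
      μ (f '' A) = ENNReal.ofReal s * μ A)

/-- `W` is a pull-back of `J` by `f^n`, i.e. a connected component of `f^{-n}(J)`. -/
def IsPullback (f : ℝ → ℝ) (n : ℕ) (J W : Set ℝ) : Prop :=
  ∃ x ∈ unitI ∩ f^[n] ⁻¹' J, W = connectedComponentIn (unitI ∩ f^[n] ⁻¹' J) x

/-- `J` is `τ`-well inside `T` (for intervals): both components of `T ∖ J`
have length at least `τ|J|`. -/
def WellInside (τ : ℝ) (J T : Set ℝ) : Prop :=
  J ⊆ T ∧ τ * Metric.diam J ≤ sInf J - sInf T ∧ τ * Metric.diam J ≤ sSup T - sSup J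


/-- Geometric growth of the measure of `[a - 2ⁿ d, a + d]` below the doubling scale `r₀`. -/
lemma one_add_pow_mul_real_le (ν : Measure ℝ) [IsFiniteMeasure ν] {C r₀ : ℝ} (hC : 0 < C)
    (hd : ∀ x ∈ unitI, ∀ r : ℝ, 0 < r → r < r₀ →
      ν (ballI x (2 * r)) ≤ ENNReal.ofReal C * ν (ballI x r))
    {a d : ℝ} (hd0 : 0 < d) (had : a + d ≤ 1) (n : ℕ) (hn : 2 ^ n * d < r₀)
    (hna : 0 ≤ a - 2 ^ n * d) :
    (1 + (C ^ 3)⁻¹) ^ n * ν.real (Icc a (a + d)) ≤ ν.real (Icc (a - 2 ^ n * d) (a + d)) := by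
  have hdr : ∀ x ∈ unitI, ∀ r : ℝ, 0 < r → r < r₀ →
      ν.real (ballI x (2 * r)) ≤ C * ν.real (ballI x r) := by
    intro x hx r h1 h2
    have h := ENNReal.toReal_mono (by finiteness) (hd x hx r h1 h2)
    rwa [ENNReal.toReal_mul, ENNReal.toReal_ofReal hC.le] at h
  induction n with
  | zero =>
    simp only [pow_zero, one_mul]
    exact measureReal_mono (Icc_subset_Icc (by linarith) le_rfl)
  | succ n ih =>
    set T : ℝ := 2 ^ n * d with hT
    have hTd : d ≤ T := le_mul_of_one_le_left hd0.le (one_le_pow₀ (by norm_num))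
    have e2 : (2 : ℝ) ^ (n + 1) * d = 2 * T := by rw [hT]; ring
    rw [e2] at hn hna ⊢
    have ih := ih (by linarith) (by linarith)
    have hx : a - 3 * T / 2 ∈ unitI := ⟨by linarith, by linarith⟩
    have d1 := hdr _ hx (T / 2) (by linarith) (by linarith)
    have d2 := hdr _ hx (2 * (T / 2)) (by linarith) (by linarith)
    have d3 := hdr _ hx (2 * (2 * (T / 2))) (by linarith) (by linarith)
    have hbig : Icc (a - T) (a + d) ⊆ ballI (a - 3 * T / 2) (2 * (2 * (2 * (T / 2)))) := by
      rintro y ⟨h1, h2⟩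
      refine ⟨⟨by linarith, by linarith⟩, ?_⟩
      rw [abs_lt]
      constructor <;> linarith
    have hsmall : ballI (a - 3 * T / 2) (T / 2) ⊆ Ico (a - 2 * T) (a - T) := by
      rintro y ⟨-, h⟩
      rw [abs_lt] at h
      constructor <;> linarith [h.1, h.2]
    have m1 := measureReal_mono (μ := ν) hbig
    have m2 := measureReal_mono (μ := ν) hsmall
    have hcomp : ν.real (Icc (a - T) (a + d)) ≤ C ^ 3 * ν.real (Ico (a - 2 * T) (a - T)) := by
      calc _ ≤ _ := m1
        _ ≤ _ := d3
        _ ≤ C * (C * (C * ν.real (ballI (a - 3 * T / 2) (T / 2)))) := by gcongr; exact d2.trans (by gcongr)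
        _ ≤ C * (C * (C * ν.real (Ico (a - 2 * T) (a - T)))) := by gcongr
        _ = _ := by ring
    have hcomp' : (C ^ 3)⁻¹ * ν.real (Icc (a - T) (a + d)) ≤ ν.real (Ico (a - 2 * T) (a - T)) := by
      rwa [inv_mul_le_iff₀ (by positivity)]
    have hdisj : Disjoint (Ico (a - 2 * T) (a - T)) (Icc (a - T) (a + d)) := by
      rw [Set.disjoint_left]
      rintro y ⟨-, h⟩ ⟨h', -⟩
      linarith
    have hun : ν.real (Ico (a - 2 * T) (a - T)) + ν.real (Icc (a - T) (a + d))
        ≤ ν.real (Icc (a - 2 * T) (a + d)) := by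
      rw [← measureReal_union hdisj measurableSet_Icc]
      refine measureReal_mono ?_
      rintro y (⟨h1, h2⟩ | ⟨h1, h2⟩) <;> constructor <;> linarith
    calc (1 + (C ^ 3)⁻¹) ^ (n + 1) * ν.real (Icc a (a + d))
        = (1 + (C ^ 3)⁻¹) * ((1 + (C ^ 3)⁻¹) ^ n * ν.real (Icc a (a + d))) := by ring
      _ ≤ (1 + (C ^ 3)⁻¹) * ν.real (Icc (a - T) (a + d)) := by gcongr
      _ ≤ _ := by linarith

/-- The comparison for an interval `L = (a - l, a)` to the left of `R = [a, a + d]`. -/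
lemma exists_le_measure_Ioo_left (ν : Measure ℝ) [IsFiniteMeasure ν]
    (hdoub : DoublingOn ν) {M : ℝ} (hM : 1 < M) :
    ∃ ε : ℝ, 0 < ε ∧ ∀ a d l : ℝ, 0 < d → 0 ≤ a - l → a + d ≤ 1 → ε * d ≤ l →
      ENNReal.ofReal M * ν (Icc a (a + d)) ≤ ν (Ioo (a - l) a) := by
  obtain ⟨C, hC, r₀, hr, hd⟩ := hdoub
  have hc : 0 < (C ^ 3)⁻¹ := by positivity
  obtain ⟨n, hn⟩ := pow_unbounded_of_one_lt (M + 1) (show 1 < 1 + (C ^ 3)⁻¹ by linarith)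
  refine ⟨2 ^ n * (1 + 2 / r₀), by positivity, fun a d l hd0 hl had hε => ?_⟩
  have hTpos : 0 < 2 ^ n * d := by positivity
  have hε' : 2 ^ n * d + 2 / r₀ * (2 ^ n * d) ≤ l := by linarith
  have hq : 0 < 2 / r₀ * (2 ^ n * d) := by positivity
  have hTr : 2 ^ n * d < r₀ := by
    have h1 : 2 / r₀ * (2 ^ n * d) < 1 := by linarith
    rw [div_mul_eq_mul_div, div_lt_one hr] at h1
    linarith
  have key := one_add_pow_mul_real_le ν hC hd hd0 had n hTr (by linarith)
  set T : ℝ := 2 ^ n * d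
  have hcov : ν.real (Icc (a - T) (a + d)) ≤ ν.real (Ioo (a - l) a) + ν.real (Icc a (a + d)) := by
    refine (measureReal_mono ?_).trans (measureReal_union_le _ _)
    rintro y ⟨h1, h2⟩
    rcases lt_or_ge y a with h | h
    · exact Or.inl ⟨by linarith, h⟩
    · exact Or.inr ⟨h, h2⟩
  have hfin : M * ν.real (Icc a (a + d)) ≤ ν.real (Ioo (a - l) a) := by
    have h0 : 0 ≤ ν.real (Icc a (a + d)) := measureReal_nonneg
    have := mul_le_mul_of_nonneg_right hn.le h0
    linarith
  rw [← ENNReal.toReal_le_toReal (by finiteness) (by finiteness), ENNReal.toReal_mul,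
    ENNReal.toReal_ofReal (by linarith)]
  exact hfin

lemma ballI_reflect (x r : ℝ) : (fun y : ℝ => 1 - y) ⁻¹' ballI x r = ballI (1 - x) r := by
  ext y
  have h : |x - (1 - y)| = |1 - x - y| := by rw [abs_sub_comm]; congr 1; ring
  simp only [ballI, unitI, mem_preimage, mem_ofPred_eq, mem_Icc, h]
  constructor <;> rintro ⟨⟨h1, h2⟩, h3⟩ <;> exact ⟨⟨by linarith, by linarith⟩, h3⟩

lemma measurableSet_ballI (x r : ℝ) : MeasurableSet (ballI x r) := by
  have : ballI x r = Icc 0 1 ∩ {y | |x - y| < r} := rfl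
  rw [this]
  exact measurableSet_Icc.inter (measurableSet_lt (by fun_prop) measurable_const)

lemma DoublingOn.reflect {μ : Measure ℝ} (h : DoublingOn μ) :
    DoublingOn (μ.map fun y : ℝ => 1 - y) := by
  obtain ⟨C, hC, r₀, hr, hd⟩ := h
  refine ⟨C, hC, r₀, hr, fun x hx r h1 h2 => ?_⟩
  have hm : Measurable fun y : ℝ => 1 - y := by fun_prop
  rw [Measure.map_apply hm (measurableSet_ballI _ _), Measure.map_apply hm (measurableSet_ballI _ _),
    ballI_reflect, ballI_reflect]
  exact hd _ ⟨by linarith [hx.2], by linarith [hx.1]⟩ r h1 h2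

lemma Ioo_sInf_sSup_subset {L : Set ℝ} (hL : L.OrdConnected) (hne : L.Nonempty) :
    Ioo (sInf L) (sSup L) ⊆ L := by
  rintro y ⟨h1, h2⟩
  obtain ⟨p, hp, hpy⟩ := exists_lt_of_csInf_lt hne h1
  obtain ⟨q, hq, hyq⟩ := exists_lt_of_lt_csSup hne h2
  exact hL.out hp hq ⟨hpy.le, hyq.le⟩

/-- **Lemma 4.3**: if the maximal entropy measure is doubling, then much longer adjacent
intervals have much bigger measure. -/
theorem adjacent_measure_comparison (f : ℝ → ℝ) (μ : Measure ℝ)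
    (hmm : Multimodal f) (hc3 : C3Nonflat f) (hrep : AllPeriodicRepelling f)
    (hex : TopExact f) (hμ : IsMaxEntropyLike f μ (Real.exp (htop f)))
    (hdoub : DoublingOn μ) :
    ∀ M' : ℝ, 1 < M' → ∃ ε : ℝ, 0 < ε ∧ ∀ L R : Set ℝ,
      L ⊆ unitI → R ⊆ unitI → L.OrdConnected → R.OrdConnected →
      L.Nonempty → R.Nonempty → Disjoint L R → (sSup L = sInf R ∨ sSup R = sInf L) →
      ε * Metric.diam R ≤ Metric.diam L →
      ENNReal.ofReal M' * μ R ≤ μ L := by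
  obtain ⟨hprob, -, -, hat, -, -⟩ := hμ
  intro M hM
  have hm : Measurable fun y : ℝ => 1 - y := by fun_prop
  obtain ⟨ε₁, hε₁, H₁⟩ := exists_le_measure_Ioo_left μ hdoub hM
  obtain ⟨ε₂, hε₂, H₂⟩ := exists_le_measure_Ioo_left (μ.map fun y : ℝ => 1 - y) hdoub.reflect hM
  refine ⟨max ε₁ ε₂, lt_max_of_lt_left hε₁, fun L R hL hR hLo hRo hLn hRn _ hadj hε => ?_⟩
  have hbI : Bornology.IsBounded unitI := Metric.isBounded_Icc 0 1
  have hLb := hbI.subset hL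
  have hRb := hbI.subset hR
  have hRsub : R ⊆ Icc (sInf R) (sSup R) := subset_Icc_csInf_csSup hRb.bddBelow hRb.bddAbove
  have hL0 : 0 ≤ sInf L := le_csInf hLn fun y hy => (hL hy).1
  have hL1 : sSup L ≤ 1 := csSup_le hLn fun y hy => (hL hy).2
  have hR0 : 0 ≤ sInf R := le_csInf hRn fun y hy => (hR hy).1
  have hR1 : sSup R ≤ 1 := csSup_le hRn fun y hy => (hR hy).2
  rw [Real.diam_eq hRb, Real.diam_eq hLb] at hε
  rcases (csInf_le_csSup hRn hRb.bddBelow hRb.bddAbove).eq_or_lt with h | h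
  · have : μ R = 0 := by
      refine measure_mono_null hRsub ?_
      rw [h, Icc_self]
      exact hat _
    simp [this]
  have hd : 0 < sSup R - sInf R := sub_pos.2 h
  have hε1 := (mul_le_mul_of_nonneg_right (le_max_left ε₁ ε₂) hd.le).trans hε
  have hε2 := (mul_le_mul_of_nonneg_right (le_max_right ε₁ ε₂) hd.le).trans hε
  rcases hadj with hadj | hadj
  · have := H₁ (sInf R) (sSup R - sInf R) (sSup L - sInf L) hd (by linarith) (by linarith) hε1
    calc ENNReal.ofReal M * μ R
        ≤ ENNReal.ofReal M * μ (Icc (sInf R) (sInf R + (sSup R - sInf R))) := by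
          gcongr
          rwa [add_sub_cancel]
      _ ≤ _ := this
      _ ≤ μ L := by
          refine measure_mono (subset_trans ?_ (Ioo_sInf_sSup_subset hLo hLn))
          rw [← hadj, sub_sub_cancel]
  · have := H₂ (1 - sSup R) (sSup R - sInf R) (sSup L - sInf L) hd (by linarith) (by linarith) hε2
    rw [Measure.map_apply hm measurableSet_Icc, Measure.map_apply hm measurableSet_Ioo] at this
    calc ENNReal.ofReal M * μ R ≤ ENNReal.ofReal M * _ := by
          gcongr
          intro y hy
          have := hRsub hy
          exact ⟨by linarith [this.2], by linarith [this.1]⟩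
      _ ≤ _ := this
      _ ≤ μ L := by
          refine measure_mono (subset_trans ?_ (Ioo_sInf_sSup_subset hLo hLn))
          rintro y ⟨h1, h2⟩
          exact ⟨by linarith, by linarith⟩

end
end

section
/- Let f: [0,1] → [0,1] be a multimodal map of class C^3 with non-flat critical points, with all periodic points hyperbolic repelling, and topologically exact, and let μ_f be its maximal entropy measure (non-atomic, with full support, and with constant Jacobian exp(h_top(f))). Then there exists τ > 0 such that the following holds: for each open subinterval V of [0,1] with |V| < τ, every integer m ≥ 1, and each pull-back W of V by f^m, if D denotes the number of j ∈ {0,…,m−1} such that the connected component of f^{−(m−j)}(V) containing f^j(W) intersects Crit(f), then exp(−m·h_top(f))·μ_f(f^m(W)) ≤ μ_f(W) ≤ 2^D·exp(−m·h_top(f))·μ_f(f^m(W)) ≤ 2^D·exp(−m·h_top(f))·μ_f(V). -/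
/-!
Write `s = exp (htop f)` and let `W` be the pull-back. The images `f^j(W)` are intervals, and it
suffices to compare `μ (f^j(W))` with `μ (f^(j+1)(W))`, one step at a time.

* For any interval `A`, cutting along the intervals of injectivity of `f` gives
  `μ (f(A)) ≤ s μ(A)` (`measure_image_le`).
* If `A` contains no critical point, then `f` is injective on `A` by Rolle's theorem, and
  `μ (f(A)) = s μ(A)` (`injOn_of_no_crit`).
* If `A` is shorter than every nondegenerate interval of injectivity, it meets at most two of
  them, so `s μ(A) ≤ 2 μ (f(A))`; degenerate intervals are null as `μ` has no atoms
  (`mul_measure_le_two_mul`).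

The last point applies to all `f^j(W)` because topological exactness makes all pull-backs of
short intervals short (`exists_pullback_small`): some `N` is such that every `f^n`, `n ≥ N`, maps
each interval of length at least `ε` onto `I`, whereas if `f^k` sends an interval into a very
short `V`, then uniform continuity of `f^i`, `i ≤ N`, prevents `f^(max k N)` of it from being
all of `I`. Multiplying the one-step estimates gives a factor `2` for each `j` counted by `D`.
-/

open Set MeasureTheory Metric Filter

noncomputable section

/-! ### One-step measure estimates -/

/-- Cutting `A` along the pieces of injectivity of `f`. -/
lemma measure_image_le {f : ℝ → ℝ} {μ : Measure ℝ} {s : ENNReal} {n : ℕ} {J : Fin n → Set ℝ}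
    (hJc : ∀ i, (J i).OrdConnected) (hJu : (⋃ i, J i) = unitI)
    (hJd : Pairwise (Function.onFun Disjoint J)) (hJi : ∀ i, InjOn f (J i))
    (hjac : ∀ A : Set ℝ, MeasurableSet A → A ⊆ unitI → InjOn f A → μ (f '' A) = s * μ A)
    {A : Set ℝ} (hA : MeasurableSet A) (hAI : A ⊆ unitI) :
    μ (f '' A) ≤ s * μ A := by
  have hm : ∀ i, MeasurableSet (A ∩ J i) := fun i => hA.inter (hJc i).measurableSet
  have hAu : A = ⋃ i, A ∩ J i := by
    rw [← inter_iUnion, hJu, inter_eq_left.2 hAI]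
  calc μ (f '' A) = μ (⋃ i, f '' (A ∩ J i)) := by rw [← image_iUnion, ← hAu]
    _ ≤ ∑ i, μ (f '' (A ∩ J i)) := measure_iUnion_fintype_le _ _
    _ = ∑ i, s * μ (A ∩ J i) := Finset.sum_congr rfl fun i _ =>
        hjac _ (hm i) (inter_subset_left.trans hAI) ((hJi i).mono inter_subset_right)
    _ = s * μ A := by
        rw [← Finset.mul_sum]
        congr 1
        conv_rhs => rw [hAu]
        rw [measure_iUnion _ hm, tsum_fintype]
        intro i j hij
        exact (hJd hij).mono inter_subset_right inter_subset_right

lemma injOn_of_no_crit {f : ℝ → ℝ} (hf : ContinuousOn f unitI) {A : Set ℝ}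
    (hA : A.OrdConnected) (hAI : A ⊆ unitI) (hcrit : ¬ (A ∩ Crit f).Nonempty) : InjOn f A := by
  have key : ∀ a ∈ A, ∀ b ∈ A, a < b → f a ≠ f b := by
    intro a ha b hb hab h
    obtain ⟨c, hc, hc0⟩ := exists_deriv_eq_zero hab
      (hf.mono ((hA.out ha hb).trans hAI)) h
    have hcA := hA.out ha hb (Ioo_subset_Icc_self hc)
    exact hcrit ⟨c, hcA, hAI hcA, hc0⟩
  intro a ha b hb h
  rcases lt_trichotomy a b with hab | hab | hab
  · exact absurd h (key a ha b hb hab)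
  · exact hab
  · exact absurd h.symm (key b hb a ha hab)

/-- If an interval `Y` contains `b` and misses `a < b` and `c > b`, it lies inside `(a, c)`. -/
lemma middle_piece {X Y Z : Set ℝ} (hY : Y.OrdConnected) (hXY : Disjoint X Y)
    (hYZ : Disjoint Y Z) {a b c : ℝ} (ha : a ∈ X) (hb : b ∈ Y) (hc : c ∈ Z)
    (hab : a < b) (hbc : b < c) {p q : ℝ} (hp : p ∈ Y) (hq : q ∈ Y) : q - p < c - a := by
  have h1 : a < p := by
    by_contra h
    exact disjoint_left.1 hXY ha (hY.out hp hb ⟨not_lt.1 h, hab.le⟩)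
  have h2 : q < c := by
    by_contra h
    exact disjoint_left.1 hYZ (hY.out hb hq ⟨hbc.le, not_lt.1 h⟩) hc
  linarith

/-- A set shorter than every nondegenerate piece meets at most two such pieces. -/
lemma mul_measure_le_two_mul {f : ℝ → ℝ} {μ : Measure ℝ} {s : ENNReal} {n : ℕ}
    {J : Fin n → Set ℝ}
    (hJc : ∀ i, (J i).OrdConnected) (hJu : (⋃ i, J i) = unitI)
    (hJd : Pairwise (Function.onFun Disjoint J)) (hJi : ∀ i, InjOn f (J i))
    (hjac : ∀ A : Set ℝ, MeasurableSet A → A ⊆ unitI → InjOn f A → μ (f '' A) = s * μ A)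
    (hatom : ∀ x : ℝ, μ {x} = 0) {ε : ℝ}
    (hε : ∀ i, (J i).Nontrivial → ∃ p ∈ J i, ∃ q ∈ J i, ε ≤ q - p)
    {A : Set ℝ} (hA : MeasurableSet A) (hAI : A ⊆ unitI)
    (hsmall : ∀ a ∈ A, ∀ b ∈ A, b - a < ε) :
    s * μ A ≤ 2 * μ (f '' A) := by
  classical
  set G : Finset (Fin n) :=
    Finset.univ.filter fun i => (J i).Nontrivial ∧ (A ∩ J i).Nonempty with hG
  have hcard : G.card ≤ 2 := by
    by_contra hlt
    obtain ⟨i, hi, j, hj, k, hk, hij, hik, hjk⟩ := Finset.two_lt_card.1 (not_le.1 hlt)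
    simp only [hG, Finset.mem_filter, Finset.mem_univ, true_and] at hi hj hk
    have key : ∀ i j k : Fin n, i ≠ j → j ≠ k → (J j).Nontrivial → ∀ a b c, a ∈ A → c ∈ A →
        a ∈ J i → b ∈ J j → c ∈ J k → a < b → b < c → False := by
      intro i j k hij hjk hj a b c haA hcA ha hb hc hab hbc
      obtain ⟨p, hp, q, hq, hpq⟩ := hε j hj
      have := middle_piece (hJc j) (hJd hij) (hJd hjk) ha hb hc hab hbc hp hq
      linarith [hsmall a haA c hcA]
    obtain ⟨hni, a, haA, ha⟩ := hi
    obtain ⟨hnj, b, hbA, hb⟩ := hj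
    obtain ⟨hnk, c, hcA, hc⟩ := hk
    have hab : a ≠ b := fun h => disjoint_left.1 (hJd hij) ha (h ▸ hb)
    have hac : a ≠ c := fun h => disjoint_left.1 (hJd hik) ha (h ▸ hc)
    have hbc : b ≠ c := fun h => disjoint_left.1 (hJd hjk) hb (h ▸ hc)
    rcases lt_or_gt_of_ne hab with h1 | h1 <;> rcases lt_or_gt_of_ne hac with h2 | h2 <;>
      rcases lt_or_gt_of_ne hbc with h3 | h3
    · exact key i j k hij hjk hnj a b c haA hcA ha hb hc h1 h3
    · exact key i k j hik hjk.symm hnk a c b haA hbA ha hc hb h2 h3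
    · linarith
    · exact key k i j hik.symm hij hni c a b hcA hbA hc ha hb h2 h1
    · exact key j i k hij.symm hik hni b a c hbA hcA hb ha hc h1 h2
    · linarith
    · exact key j k i hjk hik.symm hnk b c a hbA haA hb hc ha h3 h2
    · exact key k j i hjk.symm hij.symm hnj c b a hcA haA hc hb ha h3 h1
  have hAu : A = ⋃ i, A ∩ J i := by
    rw [← inter_iUnion, hJu, inter_eq_left.2 hAI]
  have hzero : ∀ i, i ∉ G → μ (A ∩ J i) = 0 := by
    intro i hi
    simp only [hG, Finset.mem_filter, Finset.mem_univ, true_and, not_and_or] at hi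
    rcases hi with hi | hi
    · rw [not_nontrivial_iff] at hi
      rcases hi.eq_empty_or_singleton with h | ⟨x, h⟩
      · simp [h]
      · exact measure_mono_null (h ▸ inter_subset_right) (hatom x)
    · rw [not_nonempty_iff_eq_empty.1 hi, measure_empty]
  have hsum : μ A ≤ ∑ i ∈ G, μ (A ∩ J i) := by
    calc μ A = μ (⋃ i, A ∩ J i) := by rw [← hAu]
      _ ≤ ∑ i, μ (A ∩ J i) := measure_iUnion_fintype_le _ _
      _ = ∑ i ∈ G, μ (A ∩ J i) :=
        (Finset.sum_subset (Finset.subset_univ G) fun i _ hi => hzero i hi).symm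
  calc s * μ A ≤ s * ∑ i ∈ G, μ (A ∩ J i) := by gcongr
    _ = ∑ i ∈ G, μ (f '' (A ∩ J i)) := by
        rw [Finset.mul_sum]
        exact Finset.sum_congr rfl fun i _ =>
          (hjac _ (hA.inter (hJc i).measurableSet) (inter_subset_left.trans hAI)
            ((hJi i).mono inter_subset_right)).symm
    _ ≤ ∑ _i ∈ G, μ (f '' A) :=
        Finset.sum_le_sum fun i _ => measure_mono (image_mono inter_subset_left)
    _ = G.card * μ (f '' A) := by rw [Finset.sum_const, nsmul_eq_mul]
    _ ≤ 2 * μ (f '' A) := by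
        gcongr
        exact_mod_cast hcard

/-- A positive lower bound for the lengths of the nondegenerate pieces. -/
lemma exists_piece_bound {n : ℕ} (J : Fin n → Set ℝ) :
    ∃ ε : ℝ, 0 < ε ∧ ∀ i, (J i).Nontrivial → ∃ p ∈ J i, ∃ q ∈ J i, ε ≤ q - p := by
  have h : ∀ᶠ ε in nhdsWithin (0 : ℝ) (Ioi 0),
      ∀ i, (J i).Nontrivial → ∃ p ∈ J i, ∃ q ∈ J i, ε ≤ q - p := by
    rw [eventually_all]
    intro i
    by_cases hi : (J i).Nontrivial
    · obtain ⟨p, hp, q, hq, hpq⟩ := hi.exists_lt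
      filter_upwards [Ioo_mem_nhdsGT (sub_pos.2 hpq)] with ε hε _
      exact ⟨p, hp, q, hq, hε.2.le⟩
    · exact Eventually.of_forall fun ε h => absurd h hi
  obtain ⟨ε, h1, h2⟩ := (h.and self_mem_nhdsWithin).exists
  exact ⟨ε, h2, h1⟩

/-! ### Pull-backs of short intervals are short -/

/-- Topological exactness is uniform over intervals of length at least `ε`. -/
lemma exists_uniform_exact {f : ℝ → ℝ} (hmaps : MapsTo f unitI unitI) (hex : TopExact f)
    {ε : ℝ} (hε : 0 < ε) :
    ∃ N : ℕ, ∀ n ≥ N, ∀ a ∈ unitI, ∀ b ∈ unitI, ε ≤ b - a → unitI ⊆ f^[n] '' Icc a b := by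
  -- `I` is divided into `K` intervals of length `1 / K < ε / 2`.
  obtain ⟨K, hK⟩ := exists_nat_gt (2 / ε)
  have hK0 : (0 : ℝ) < K := lt_trans (by positivity) hK
  have hKε : 2 < K * ε := (div_lt_iff₀ hε).1 hK
  have hsurj : unitI ⊆ f '' unitI := by
    obtain ⟨n, hn, h⟩ := hex unitI ⟨0, by simp [unitI]⟩ subset_rfl ⟨univ, isOpen_univ, by simp⟩
    obtain ⟨k, rfl⟩ := Nat.exists_eq_add_of_le' hn
    intro y hy
    rw [← h] at hy
    obtain ⟨x, hx, rfl⟩ := hy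
    exact ⟨f^[k] x, hmaps.iterate k hx, (Function.iterate_succ_apply' f k x).symm⟩
  have hsub : ∀ i : Fin K, Ioo ((i : ℝ) / K) ((i + 1 : ℝ) / K) ⊆ unitI := by
    intro i x hx
    have hi : ((i : ℕ) : ℝ) + 1 ≤ K := by exact_mod_cast i.2
    have h2 : ((i : ℕ) + 1 : ℝ) / K ≤ 1 := (div_le_one hK0).2 hi
    have h1 : (0 : ℝ) ≤ (i : ℕ) / K := by positivity
    exact ⟨h1.trans hx.1.le, hx.2.le.trans h2⟩
  have hev : ∀ᶠ n in atTop, ∀ i : Fin K,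
      unitI ⊆ f^[n] '' Ioo ((i : ℝ) / K) ((i + 1 : ℝ) / K) := by
    rw [eventually_all]
    intro i
    have hne : (Ioo ((i : ℝ) / K) ((i + 1 : ℝ) / K)).Nonempty :=
      nonempty_Ioo.2 (by gcongr; linarith)
    obtain ⟨n, -, h⟩ := hex _ hne (hsub i) ⟨_, isOpen_Ioo, (inter_eq_left.2 (hsub i)).symm⟩
    filter_upwards [eventually_ge_atTop n] with k hk
    induction k, hk using Nat.le_induction with
    | base => exact h.ge
    | succ k hk ih =>
      rw [Function.iterate_succ', image_comp]
      exact hsurj.trans (image_mono ih)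
  obtain ⟨N, hN⟩ := eventually_atTop.1 hev
  refine ⟨N, fun n hn a ha b hb hab => ?_⟩
  have haK : 0 ≤ a * K := mul_nonneg ha.1 hK0.le
  have hceil := Nat.ceil_lt_add_one haK
  have hle := Nat.le_ceil (a * K)
  have hend : (⌈a * K⌉₊ : ℝ) + 1 ≤ b * K := by nlinarith
  have hbK : b * K ≤ K := by nlinarith [hb.2]
  have hlt : ⌈a * K⌉₊ < K := by
    have : (⌈a * K⌉₊ : ℝ) < K := by linarith
    exact_mod_cast this
  refine (hN n hn ⟨_, hlt⟩).trans (image_mono ?_)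
  intro x hx
  have h1 := (div_lt_iff₀ hK0).1 hx.1
  have h2 := (lt_div_iff₀ hK0).1 hx.2
  simp only at h1 h2
  constructor
  · exact le_of_mul_le_mul_right (by linarith) hK0
  · exact le_of_mul_le_mul_right (by linarith) hK0

/-- All pull-backs of sufficiently short intervals have length less than `ε`. -/
lemma exists_pullback_small {f : ℝ → ℝ} (hf : ContinuousOn f unitI)
    (hmaps : MapsTo f unitI unitI) (hex : TopExact f) {ε : ℝ} (hε : 0 < ε) :
    ∃ τ : ℝ, 0 < τ ∧ ∀ V ⊆ unitI, Metric.diam V < τ → ∀ k : ℕ, ∀ A ⊆ unitI, A.OrdConnected →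
      MapsTo f^[k] A V → ∀ a ∈ A, ∀ b ∈ A, b - a < ε := by
  obtain ⟨N, hN⟩ := exists_uniform_exact hmaps hex hε
  have hτ : ∀ᶠ τ in nhdsWithin (0 : ℝ) (Ioi 0), ∀ i : Fin (N + 1), ∀ x ∈ unitI, ∀ y ∈ unitI,
      dist x y < τ → dist (f^[i] x) (f^[i] y) < 1 := by
    rw [eventually_all]
    intro i
    have huc : UniformContinuousOn f^[i] unitI :=
      isCompact_Icc.uniformContinuousOn_of_continuous (hf.iterate hmaps i)
    obtain ⟨δ, hδ, h⟩ := Metric.uniformContinuousOn_iff.1 huc 1 one_pos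
    filter_upwards [Ioo_mem_nhdsGT hδ] with τ hτ x hx y hy hxy
    exact h x hx y hy (hxy.trans hτ.2)
  obtain ⟨τ, h1, h2⟩ := (hτ.and self_mem_nhdsWithin).exists
  refine ⟨τ, h2, fun V hV hd k A hA hAc hAV a ha b hb => ?_⟩
  by_contra hlt
  have honto := hN (max k N) (le_max_right _ _) a (hA ha) b (hA hb) (not_lt.1 hlt)
  obtain ⟨x, hx, hx0⟩ := honto (show (0 : ℝ) ∈ unitI by simp [unitI])
  obtain ⟨y, hy, hy1⟩ := honto (show (1 : ℝ) ∈ unitI by simp [unitI])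
  have hxV := hAV (hAc.out ha hb hx)
  have hyV := hAV (hAc.out ha hb hy)
  have hdist : dist (f^[k] x) (f^[k] y) < τ :=
    (Metric.dist_le_diam_of_mem ((Metric.isBounded_Icc 0 1).subset hV) hxV hyV).trans_lt hd
  have hcl := h1 ⟨max k N - k, by omega⟩ _ (hV hxV) _ (hV hyV) hdist
  have hk : max k N - k + k = max k N := by omega
  simp only [← Function.iterate_add_apply, hk, hx0, hy1] at hcl
  norm_num at hcl

/-! ### The comparison -/

/-- **Lemma 4.4**: comparison of the maximal entropy measure of a pull-back with the
measure of its image. -/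
theorem pullback_measure_comparison (f : ℝ → ℝ) (μ : Measure ℝ)
    (hmm : Multimodal f) (hc3 : C3Nonflat f) (hrep : AllPeriodicRepelling f)
    (hex : TopExact f) (hμ : IsMaxEntropyLike f μ (Real.exp (htop f))) :
    ∃ τ : ℝ, 0 < τ ∧ ∀ V : Set ℝ,
      V ⊆ unitI → V.OrdConnected → V.Nonempty → (∃ U : Set ℝ, IsOpen U ∧ V = U ∩ unitI) →
      Metric.diam V < τ →
      ∀ m : ℕ, 1 ≤ m → ∀ x₀ ∈ unitI ∩ f^[m] ⁻¹' V, ∀ W : Set ℝ,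
        W = connectedComponentIn (unitI ∩ f^[m] ⁻¹' V) x₀ →
        ∀ D : ℕ, D = Nat.card {j : ℕ // j < m ∧
          (connectedComponentIn (unitI ∩ f^[m - j] ⁻¹' V) (f^[j] x₀) ∩ Crit f).Nonempty} →
        ENNReal.ofReal (Real.exp (-(m : ℝ) * htop f)) * μ (f^[m] '' W) ≤ μ W ∧
        μ W ≤ 2 ^ D * ENNReal.ofReal (Real.exp (-(m : ℝ) * htop f)) * μ (f^[m] '' W) ∧
        2 ^ D * ENNReal.ofReal (Real.exp (-(m : ℝ) * htop f)) * μ (f^[m] '' W) ≤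
          2 ^ D * ENNReal.ofReal (Real.exp (-(m : ℝ) * htop f)) * μ V := by
  classical
  obtain ⟨hf, hmaps, -, n, J, hJc, hJu, hJd, hJi⟩ := hmm
  obtain ⟨-, -, -, hatom, -, hjac⟩ := hμ
  obtain ⟨ε, hε, hJε⟩ := exists_piece_bound J
  obtain ⟨τ, hτ, hsmall⟩ := exists_pullback_small hf hmaps hex hε
  refine ⟨τ, hτ, ?_⟩
  intro V hVI hVc _ _ hVd m _ x₀ hx₀ W hW D hD
  set S : ENNReal := ENNReal.ofReal (Real.exp (htop f)) with hS
  set E : ENNReal := ENNReal.ofReal (Real.exp (-(m : ℝ) * htop f)) with hE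
  have hES : E * S ^ m = 1 := by
    rw [hE, hS, ← ENNReal.ofReal_pow (Real.exp_pos _).le,
      ← ENNReal.ofReal_mul (Real.exp_pos _).le, ← Real.exp_nat_mul, ← Real.exp_add]
    simp
  have hWsub : W ⊆ unitI ∩ f^[m] ⁻¹' V := hW ▸ connectedComponentIn_subset _ _
  have hWconn : IsPreconnected W := hW ▸ isPreconnected_connectedComponentIn
  have hx₀W : x₀ ∈ W := hW ▸ mem_connectedComponentIn hx₀
  have hAI : ∀ j, f^[j] '' W ⊆ unitI := fun j =>
    ((hmaps.iterate j).mono_left (hWsub.trans inter_subset_left)).image_subset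
  have hApre : ∀ j, IsPreconnected (f^[j] '' W) := fun j =>
    hWconn.image _ ((hf.iterate hmaps j).mono (hWsub.trans inter_subset_left))
  have hAc : ∀ j, (f^[j] '' W).OrdConnected := fun j => (hApre j).ordConnected
  have hAm : ∀ j, MeasurableSet (f^[j] '' W) := fun j => (hAc j).measurableSet
  have hsucc : ∀ j, f^[j + 1] '' W = f '' (f^[j] '' W) := fun j => by
    rw [Function.iterate_succ', image_comp]
  have hAV : ∀ j, j < m → MapsTo f^[m - j] (f^[j] '' W) V := by
    rintro j hj _ ⟨w, hw, rfl⟩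
    rw [← Function.iterate_add_apply, Nat.sub_add_cancel hj.le]
    exact (hWsub hw).2
  have hlower : ∀ k, μ (f^[k] '' W) ≤ S ^ k * μ W := by
    intro k
    induction k with
    | zero => simp
    | succ k ih =>
      rw [hsucc, pow_succ', mul_assoc]
      exact (measure_image_le hJc hJu hJd hJi hjac (hAm k) (hAI k)).trans (by gcongr)
  set P : ℕ → Prop := fun j =>
    (connectedComponentIn (unitI ∩ f^[m - j] ⁻¹' V) (f^[j] x₀) ∩ Crit f).Nonempty with hP
  have hstep : ∀ j, j < m →
      S * μ (f^[j] '' W) ≤ (if P j then 2 else 1) * μ (f^[j + 1] '' W) := by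
    intro j hj
    rw [hsucc]
    split_ifs with h
    · exact mul_measure_le_two_mul hJc hJu hJd hJi hjac hatom hJε (hAm j) (hAI j)
        (hsmall V hVI hVd (m - j) _ (hAI j) (hAc j) (hAV j hj))
    · have hsub : f^[j] '' W ⊆ connectedComponentIn (unitI ∩ f^[m - j] ⁻¹' V) (f^[j] x₀) :=
        (hApre j).subset_connectedComponentIn (mem_image_of_mem _ hx₀W)
          (subset_inter (hAI j) (hAV j hj))
      have hinj : InjOn f (f^[j] '' W) := injOn_of_no_crit hf (hAc j) (hAI j)
        fun hne => h (hne.mono (inter_subset_inter_left _ hsub))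
      rw [one_mul, hjac _ (hAm j) (hAI j) hinj]
  have hupper : ∀ k, k ≤ m →
      S ^ k * μ W ≤ 2 ^ ((Finset.range k).filter P).card * μ (f^[k] '' W) := by
    intro k
    induction k with
    | zero => simp
    | succ k ih =>
      intro hk
      calc S ^ (k + 1) * μ W = S * (S ^ k * μ W) := by rw [pow_succ', mul_assoc]
        _ ≤ S * (2 ^ ((Finset.range k).filter P).card * μ (f^[k] '' W)) := by
            exact mul_le_mul_right (ih (by omega)) _
        _ = 2 ^ ((Finset.range k).filter P).card * (S * μ (f^[k] '' W)) := by ring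
        _ ≤ 2 ^ ((Finset.range k).filter P).card *
              ((if P k then 2 else 1) * μ (f^[k + 1] '' W)) := by
            exact mul_le_mul_right (hstep k (by omega)) _
        _ = 2 ^ ((Finset.range (k + 1)).filter P).card * μ (f^[k + 1] '' W) := by
            rw [Finset.range_add_one, Finset.filter_insert]
            split_ifs
            · rw [Finset.card_insert_of_notMem (by simp), pow_succ, mul_assoc]
            · rw [one_mul]
  have hDcard : D = ((Finset.range m).filter P).card := by
    rw [hD, ← Nat.card_eq_finsetCard]
    exact Nat.card_congr (Equiv.subtypeEquivRight fun j => by simp [hP])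
  refine ⟨?_, ?_, ?_⟩
  · calc E * μ (f^[m] '' W) ≤ E * (S ^ m * μ W) := by gcongr; exact hlower m
      _ = μ W := by rw [← mul_assoc, hES, one_mul]
  · calc μ W = E * (S ^ m * μ W) := by rw [← mul_assoc, hES, one_mul]
      _ ≤ E * (2 ^ D * μ (f^[m] '' W)) := by
          rw [hDcard]
          exact mul_le_mul_right (hupper m le_rfl) _
      _ = 2 ^ D * E * μ (f^[m] '' W) := by ring
  · gcongr
    rintro _ ⟨w, hw, rfl⟩
    exact (hWsub hw).2

end
end

section
/- Let f: [0,1] → [0,1] be a multimodal map that is topologically exact. Then there exists a non-atomic Borel probability measure μ_f on [0,1] whose topological support equals [0,1] and whose Jacobian with respect to f is constant equal to exp(h_top(f)), i.e., μ_f(f(A)) = exp(h_top(f))·μ_f(A) for every Borel set A ⊂ [0,1] on which f is injective. -/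
/-!
Let `C` be a finite set containing the end points of the monotonicity intervals of `f`.  The points
whose orbit meets `C` before time `n` cut the unit interval into intervals on which `f^n` is
injective; twice their number plus one is submultiplicative in `n`, and topological exactness makes
it grow exponentially, at a rate `s > 1`.

Consider `∑ n, t ^ n • (counting measure on f^{-n}(C))` for `t < s⁻¹`.  Its total mass diverges as
`t` increases to `s⁻¹`.  If `f` is injective on `A`, then the mass of `f(A)` is that of `A` divided
by `t`, up to the constant term of the series.  Normalising and passing to the limit along an
ultrafilter therefore gives a finitely additive probability `Λ` on all subsets with
`Λ (f '' A) = s * Λ A` whenever `f` is injective on `A` (`exists_content`).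

A set on which `f^n` is injective has `Λ`-mass at most `s⁻¹ ^ n`.  Hence points are null and the
distribution function `x ↦ Λ (Iic x)` is continuous; by exactness it is strictly increasing on the
unit interval.  Its Stieltjes measure agrees with `Λ` on intervals and so inherits the Jacobian
`s`, first on Borel subsets of the monotonicity intervals and then on all Borel sets where `f` is
injective (`exists_measure_of_content`).

It remains to see that the topological entropy is `log s` (`IsJacobianContent.exp_htop`).  In the
coordinate `x ↦ Λ (Iic x)` the map is `s`-Lipschitz, so about `s ^ n` equally spaced points form an
`(n, ε)`-cover: the entropy is at most `log s`.  Conversely, if `ε` is so small that an `ε`-ball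
contains at most one cut point of `f^N`, a dynamical ball of length `N * m` has mass at most
`(2 * s⁻¹ ^ N) ^ m`; the entropy is therefore at least `log s - log 2 / N` for every `N ≥ 1`.
-/

open Set MeasureTheory Metric Filter

noncomputable section

/-! ### Monotonicity pieces of the iterates -/

/-- Points of the unit interval that meet `C` within the first `n` steps of their orbit.  When `C`
contains the end points of the monotonicity intervals of `f`, these points cut the unit interval
into intervals on which `f^n` is injective. -/
def cutSet (f : ℝ → ℝ) (C : Set ℝ) (n : ℕ) : Set ℝ := {x ∈ unitI | ∃ k < n, f^[k] x ∈ C}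

/-- The part of `f^{-n}(T)` inside the unit interval. -/
def preI (f : ℝ → ℝ) (n : ℕ) (T : Set ℝ) : Set ℝ := {x ∈ unitI | f^[n] x ∈ T}

/-- A finite set `C` such that `f` is injective on every subinterval of the unit interval that
avoids `C`. -/
structure IsCut (f : ℝ → ℝ) (C : Set ℝ) : Prop where
  finite : C.Finite
  inj : ∀ K ⊆ unitI, K.OrdConnected → Disjoint K C → InjOn f K

lemma exists_isCut {f : ℝ → ℝ} {n : ℕ} {J : Fin n → Set ℝ} (hJ : ∀ i, (J i).OrdConnected)
    (hU : (⋃ i, J i) = unitI) (hinj : ∀ i, InjOn f (J i)) : ∃ C, IsCut f C := by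
  refine ⟨range (fun i => sInf (J i)) ∪ range (fun i => sSup (J i)),
    (finite_range _).union (finite_range _), fun K hK hKc hdis => ?_⟩
  rcases K.eq_empty_or_nonempty with rfl | ⟨x, hx⟩
  · simp
  have hxU : x ∈ ⋃ i, J i := hU ▸ hK hx
  obtain ⟨i, hi⟩ := mem_iUnion.1 hxU
  have hJI : J i ⊆ unitI := hU ▸ subset_iUnion J i
  have hbb : BddBelow (J i) := ⟨0, fun y hy => (hJI hy).1⟩
  have hba : BddAbove (J i) := ⟨1, fun y hy => (hJI hy).2⟩
  -- leaving `J i` inside `K` would force `K` to contain an end point of `J i`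
  refine (hinj i).mono fun y hy => ?_
  by_contra hyJ
  rcases lt_trichotomy y x with h | rfl | h
  · have hlow : ∀ z ∈ J i, y ≤ z := fun z hz => by
      by_contra! hzy
      exact hyJ ((hJ i).out hz hi ⟨hzy.le, h.le⟩)
    have : sInf (J i) ∈ K := hKc.out hy hx ⟨le_csInf ⟨x, hi⟩ hlow, csInf_le hbb hi⟩
    exact disjoint_left.1 hdis this (Or.inl ⟨i, rfl⟩)
  · exact hyJ hi
  · have hup : ∀ z ∈ J i, z ≤ y := fun z hz => by
      by_contra! hzy
      exact hyJ ((hJ i).out hi hz ⟨h.le, hzy.le⟩)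
    have : sSup (J i) ∈ K := hKc.out hx hy ⟨le_csSup hba hi, csSup_le ⟨x, hi⟩ hup⟩
    exact disjoint_left.1 hdis this (Or.inr ⟨i, rfl⟩)

lemma ordConnected_image {f : ℝ → ℝ} (hc : ContinuousOn f unitI) {K : Set ℝ} (hK : K ⊆ unitI)
    (hKc : K.OrdConnected) : (f '' K).OrdConnected :=
  (hKc.isPreconnected.image f (hc.mono hK)).ordConnected

lemma iterate_mem_unitI {f : ℝ → ℝ} (hm : MapsTo f unitI unitI) (n : ℕ) {x : ℝ} (hx : x ∈ unitI) :
    f^[n] x ∈ unitI := hm.iterate n hx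

lemma IsCut.injOn_iterate {f : ℝ → ℝ} {C : Set ℝ} (hC : IsCut f C) (hc : ContinuousOn f unitI)
    (hm : MapsTo f unitI unitI) (n : ℕ) {K : Set ℝ} (hK : K ⊆ unitI) (hKc : K.OrdConnected)
    (hd : Disjoint K (cutSet f C n)) : InjOn f^[n] K := by
  induction n generalizing K with
  | zero => simp
  | succ n ih =>
    rw [Function.iterate_succ]
    refine InjOn.comp (t := f '' K) (ih ?_ (ordConnected_image hc hK hKc) ?_) ?_ (mapsTo_image f K)
    · exact (image_mono hK).trans hm.image_subset
    · rw [disjoint_left]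
      rintro _ ⟨x, hx, rfl⟩ ⟨_, k, hk, hkC⟩
      exact disjoint_left.1 hd hx ⟨hK hx, k + 1, by omega, by simpa using hkC⟩
    · refine hC.inj K hK hKc (disjoint_left.2 fun x hx hxC => ?_)
      exact disjoint_left.1 hd hx ⟨hK hx, 0, by omega, by simpa using hxC⟩

/-- A point `x` is encoded by the number of cut points `≤ x` plus the number of cut points `< x`;
two points of one fibre of `f^n` with the same code would have no cut point between them. -/
lemma IsCut.fiber {f : ℝ → ℝ} {C : Set ℝ} (hC : IsCut f C) (hc : ContinuousOn f unitI)
    (hm : MapsTo f unitI unitI) (n : ℕ) (hfin : (cutSet f C n).Finite) (y : ℝ) :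
    (preI f n {y}).Finite ∧ (preI f n {y}).ncard ≤ 2 * (cutSet f C n).ncard + 1 := by
  classical
  set D := hfin.toFinset with hD
  have hDc : (cutSet f C n).ncard = D.card := ncard_eq_toFinset_card _ hfin
  let g : ℝ → ℕ := fun x => (D.filter (· ≤ x)).card + (D.filter (· < x)).card
  have key : ∀ x ∈ preI f n {y}, ∀ x' ∈ preI f n {y}, x < x' → g x < g x' := by
    intro x hx x' hx' hlt
    have h1 : D.filter (· ≤ x) ⊆ D.filter (· ≤ x') := fun z hz => by
      simp only [Finset.mem_filter] at hz ⊢; exact ⟨hz.1, hz.2.trans hlt.le⟩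
    have h2 : D.filter (· < x) ⊆ D.filter (· < x') := fun z hz => by
      simp only [Finset.mem_filter] at hz ⊢; exact ⟨hz.1, hz.2.trans hlt⟩
    have hsub : Icc x x' ⊆ unitI := fun z hz => ⟨hx.1.1.trans hz.1, hz.2.trans hx'.1.2⟩
    have hex : ¬ Disjoint (Icc x x') (cutSet f C n) := fun hd => by
      have := hC.injOn_iterate hc hm n hsub ordConnected_Icc hd
        (left_mem_Icc.2 hlt.le) (right_mem_Icc.2 hlt.le) (hx.2.trans hx'.2.symm)
      exact hlt.ne this
    obtain ⟨p, hp, hpD⟩ := not_disjoint_iff.1 hex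
    have hpD' : p ∈ D := hfin.mem_toFinset.2 hpD
    rcases hp.1.lt_or_eq with h | h
    · have : (D.filter (· ≤ x)).card < (D.filter (· ≤ x')).card :=
        Finset.card_lt_card ⟨h1, fun hh => by
          have := hh (Finset.mem_filter.2 ⟨hpD', hp.2⟩)
          exact absurd (Finset.mem_filter.1 this).2 (not_le.2 h)⟩
      exact add_lt_add_of_lt_of_le this (Finset.card_le_card h2)
    · have : (D.filter (· < x)).card < (D.filter (· < x')).card :=
        Finset.card_lt_card ⟨h2, fun hh => by
          have := hh (Finset.mem_filter.2 ⟨hpD', h ▸ hlt⟩)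
          exact absurd (Finset.mem_filter.1 this).2 (by simp [h])⟩
      exact add_lt_add_of_le_of_lt (Finset.card_le_card h1) this
  have ginj : InjOn g (preI f n {y}) := by
    intro x hx x' hx' he
    rcases lt_trichotomy x x' with h | h | h
    · exact absurd he (key x hx x' hx' h).ne
    · exact h
    · exact absurd he (key x' hx' x hx h).ne'
  have gmaps : MapsTo g (preI f n {y}) (Finset.range (2 * D.card + 1) : Finset ℕ) := by
    intro x _
    have := Finset.card_filter_le D (· ≤ x)
    have := Finset.card_filter_le D (· < x)
    simp only [Finset.coe_range, mem_Iio, g]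
    omega
  refine ⟨Finite.of_injOn gmaps ginj (Finset.finite_toSet _), ?_⟩
  have := ncard_le_ncard_of_injOn g gmaps ginj (Finset.finite_toSet _)
  simpa [hDc] using this

lemma IsCut.preI_aux {f : ℝ → ℝ} {C : Set ℝ} (hC : IsCut f C) (hc : ContinuousOn f unitI)
    (hm : MapsTo f unitI unitI) (n : ℕ) (hfin : (cutSet f C n).Finite) {T : Set ℝ}
    (hT : T.Finite) : (preI f n T).Finite ∧
      (preI f n T).ncard ≤ (2 * (cutSet f C n).ncard + 1) * T.ncard := by
  classical
  have hEq : preI f n T = ⋃ y ∈ T, preI f n {y} := by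
    ext x; simp [preI]
  have hF : (preI f n T).Finite := by
    rw [hEq]; exact hT.biUnion fun y _ => (hC.fiber hc hm n hfin y).1
  refine ⟨hF, ?_⟩
  rw [ncard_eq_toFinset_card _ hF, ncard_eq_toFinset_card _ hT]
  refine Finset.card_le_mul_card_image_of_maps_to (f := f^[n]) (fun x hx => ?_) _ fun y _ => ?_
  · simpa using ((hF.mem_toFinset).1 hx).2
  · refine le_trans (le_of_eq ?_) (hC.fiber hc hm n hfin y).2
    rw [ncard_eq_toFinset_card _ (hC.fiber hc hm n hfin y).1]
    congr 1
    ext x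
    simp only [Finset.mem_filter, Finite.mem_toFinset, preI, mem_ofPred_eq, mem_singleton_iff]
    constructor
    · rintro ⟨⟨h1, _⟩, h3⟩; exact ⟨h1, h3⟩
    · rintro ⟨h1, h3⟩; refine ⟨⟨h1, ?_⟩, h3⟩; rw [h3]; simp_all

lemma cutSet_succ (f : ℝ → ℝ) (C : Set ℝ) (n : ℕ) :
    cutSet f C (n + 1) = cutSet f C n ∪ preI f n C := by
  ext x
  simp only [cutSet, preI, mem_union, mem_ofPred_eq, Nat.lt_succ_iff_lt_or_eq]
  constructor
  · rintro ⟨h, k, hk | rfl, hC⟩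
    exacts [Or.inl ⟨h, k, hk, hC⟩, Or.inr ⟨h, hC⟩]
  · rintro (⟨h, k, hk, hC⟩ | ⟨h, hC⟩)
    exacts [⟨h, k, Or.inl hk, hC⟩, ⟨h, n, Or.inr rfl, hC⟩]

lemma cutSet_add {f : ℝ → ℝ} (hm : MapsTo f unitI unitI) (C : Set ℝ) (n m : ℕ) :
    cutSet f C (n + m) = cutSet f C n ∪ preI f n (cutSet f C m) := by
  ext x
  simp only [cutSet, preI, mem_union, mem_ofPred_eq]
  constructor
  · rintro ⟨h, k, hk, hC⟩
    by_cases hkn : k < n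
    · exact Or.inl ⟨h, k, hkn, hC⟩
    · refine Or.inr ⟨h, hm.iterate n h, k - n, by omega, ?_⟩
      rwa [← Function.iterate_add_apply, Nat.sub_add_cancel (by omega)]
  · rintro (⟨h, k, hk, hC⟩ | ⟨h, -, k, hk, hC⟩)
    · exact ⟨h, k, by omega, hC⟩
    · exact ⟨h, k + n, by omega, by rwa [Function.iterate_add_apply]⟩

lemma IsCut.finite_cutSet {f : ℝ → ℝ} {C : Set ℝ} (hC : IsCut f C) (hc : ContinuousOn f unitI)
    (hm : MapsTo f unitI unitI) (n : ℕ) : (cutSet f C n).Finite := by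
  induction n with
  | zero => simp [cutSet]
  | succ n ih => rw [cutSet_succ]; exact ih.union (hC.preI_aux hc hm n ih hC.finite).1

/-- An upper bound for the cardinality of every fibre of `f^n`, chosen so as to be exactly
submultiplicative in `n`. -/
def lapBound (f : ℝ → ℝ) (C : Set ℝ) (n : ℕ) : ℕ := 2 * (cutSet f C n).ncard + 1

lemma IsCut.finite_preI {f : ℝ → ℝ} {C : Set ℝ} (hC : IsCut f C) (hc : ContinuousOn f unitI)
    (hm : MapsTo f unitI unitI) (n : ℕ) {T : Set ℝ} (hT : T.Finite) : (preI f n T).Finite :=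
  (hC.preI_aux hc hm n (hC.finite_cutSet hc hm n) hT).1

lemma IsCut.ncard_preI_le {f : ℝ → ℝ} {C : Set ℝ} (hC : IsCut f C) (hc : ContinuousOn f unitI)
    (hm : MapsTo f unitI unitI) (n : ℕ) {T : Set ℝ} (hT : T.Finite) :
    (preI f n T).ncard ≤ lapBound f C n * T.ncard :=
  (hC.preI_aux hc hm n (hC.finite_cutSet hc hm n) hT).2

lemma IsCut.lapBound_add_le {f : ℝ → ℝ} {C : Set ℝ} (hC : IsCut f C) (hc : ContinuousOn f unitI)
    (hm : MapsTo f unitI unitI) (n m : ℕ) :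
    lapBound f C (n + m) ≤ lapBound f C n * lapBound f C m := by
  have h1 := ncard_union_le (cutSet f C n) (preI f n (cutSet f C m))
  rw [← cutSet_add hm] at h1
  have h2 := hC.ncard_preI_le hc hm n (hC.finite_cutSet hc hm m)
  have : (cutSet f C (n + m)).ncard ≤
      (cutSet f C n).ncard + lapBound f C n * (cutSet f C m).ncard := h1.trans (by omega)
  simp only [lapBound] at *
  nlinarith

lemma ncard_cutSet_le_sum (f : ℝ → ℝ) (C : Set ℝ) (n : ℕ) :
    (cutSet f C n).ncard ≤ ∑ k ∈ Finset.range n, (preI f k C).ncard := by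
  induction n with
  | zero => simp [cutSet]
  | succ n ih =>
    rw [cutSet_succ, Finset.sum_range_succ]
    exact (ncard_union_le _ _).trans (by omega)

/-! ### Exponential growth of the number of preimages -/

lemma TopExact.surj {f : ℝ → ℝ} (hex : TopExact f) (hm : MapsTo f unitI unitI) :
    f '' unitI = unitI := by
  obtain ⟨n, hn, h⟩ := hex unitI ⟨0, by simp [unitI]⟩ subset_rfl ⟨univ, isOpen_univ, by simp⟩
  refine hm.image_subset.antisymm fun y hy => ?_
  obtain ⟨m, rfl⟩ : ∃ m, n = m + 1 := ⟨n - 1, by omega⟩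
  rw [← h] at hy
  obtain ⟨x, hx, rfl⟩ := hy
  exact ⟨f^[m] x, hm.iterate m hx, (Function.iterate_succ_apply' f m x).symm⟩

lemma TopExact.eventually_image {f : ℝ → ℝ} (hex : TopExact f) (hm : MapsTo f unitI unitI)
    {a b : ℝ} (hab : a < b) (ha : 0 ≤ a) (hb : b ≤ 1) :
    ∃ n, ∀ k ≥ n, f^[k] '' Ioo a b = unitI := by
  have hsub : Ioo a b ⊆ unitI := fun x hx => ⟨ha.trans hx.1.le, hx.2.le.trans hb⟩
  obtain ⟨n, -, h⟩ := hex (Ioo a b) (nonempty_Ioo.2 hab) hsub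
    ⟨Ioo a b, isOpen_Ioo, (inter_eq_left.2 hsub).symm⟩
  refine ⟨n, fun k hk => ?_⟩
  induction k, hk using Nat.le_induction with
  | base => exact h
  | succ k _ ih => rw [Function.iterate_succ', image_comp, ih, hex.surj hm]

/-- Two disjoint open intervals are both stretched over the whole interval by some `f^N`, so each
point has at least `2^k` preimages under `f^(N k)`. -/
lemma TopExact.two_pow_le {f : ℝ → ℝ} {C : Set ℝ} (hex : TopExact f) (hC : IsCut f C)
    (hc : ContinuousOn f unitI) (hm : MapsTo f unitI unitI) :
    ∃ N ≥ 1, ∀ k, 2 ^ k ≤ lapBound f C (N * k) := by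
  obtain ⟨n₁, h₁⟩ := hex.eventually_image hm (a := 0) (b := 1 / 2) (by norm_num) le_rfl (by norm_num)
  obtain ⟨n₂, h₂⟩ := hex.eventually_image hm (a := 1 / 2) (b := 1) (by norm_num) (by norm_num) le_rfl
  set N := max (max n₁ n₂) 1 with hN
  have e₁ : ∀ y ∈ unitI, ∃ x ∈ Ioo (0 : ℝ) (1 / 2), f^[N] x = y := fun y hy => by
    have := h₁ N (by omega)
    rwa [← this] at hy
  have e₂ : ∀ y ∈ unitI, ∃ x ∈ Ioo (1 / 2 : ℝ) 1, f^[N] x = y := fun y hy => by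
    have := h₂ N (by omega)
    rwa [← this] at hy
  choose! φ hφ hφ' using e₁
  choose! ψ hψ hψ' using e₂
  refine ⟨N, by omega, fun k => ?_⟩
  have key : ∀ k, 2 ^ k ≤ (preI f (N * k) {0}).ncard := by
    intro k
    induction k with
    | zero =>
      have : preI f (N * 0) {0} = {0} := by
        ext x; simp only [preI, mul_zero, Function.iterate_zero, id, mem_ofPred_eq,
          mem_singleton_iff, and_iff_right_iff_imp]
        rintro rfl; simp [unitI]
      rw [this]; simp
    | succ k ih =>
      set T := preI f (N * k) {0} with hT
      have hTI : T ⊆ unitI := fun x hx => hx.1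
      have hTf : T.Finite := hC.finite_preI hc hm _ (finite_singleton 0)
      have hsub : φ '' T ∪ ψ '' T ⊆ preI f (N * (k + 1)) {0} := by
        have hh : N * (k + 1) = N * k + N := by ring
        rintro _ (⟨x, hx, rfl⟩ | ⟨x, hx, rfl⟩)
        · have h := hφ x (hTI hx)
          refine ⟨⟨h.1.le, by linarith [h.2]⟩, ?_⟩
          rw [hh, Function.iterate_add_apply, hφ' x (hTI hx)]; exact hx.2
        · have h := hψ x (hTI hx)
          refine ⟨⟨by linarith [h.1], h.2.le⟩, ?_⟩
          rw [hh, Function.iterate_add_apply, hψ' x (hTI hx)]; exact hx.2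
      have hdis : Disjoint (φ '' T) (ψ '' T) := by
        rw [disjoint_left]
        rintro _ ⟨x, hx, rfl⟩ ⟨y, hy, he⟩
        have h1 := hφ x (hTI hx)
        have h2 := hψ y (hTI hy)
        rw [he] at h2
        exact absurd h1.2 (not_lt.2 h2.1.le)
      have iφ : InjOn φ T := fun x hx y hy he => by
        rw [← hφ' x (hTI hx), ← hφ' y (hTI hy), he]
      have iψ : InjOn ψ T := fun x hx y hy he => by
        rw [← hψ' x (hTI hx), ← hψ' y (hTI hy), he]
      have := ncard_le_ncard hsub (hC.finite_preI hc hm _ (finite_singleton 0))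
      rw [ncard_union_eq hdis (hTf.image _) (hTf.image _), iφ.ncard_image,
        iψ.ncard_image] at this
      rw [pow_succ]; omega
  have := hC.ncard_preI_le hc hm (N * k) (finite_singleton 0)
  rw [ncard_singleton, mul_one] at this
  exact (key k).trans this

/-- Fekete's lemma in multiplicative form. -/
lemma exists_growth {e : ℕ → ℕ} (h1 : ∀ n, 1 ≤ e n) (hsub : ∀ n m, e (n + m) ≤ e n * e m)
    {N : ℕ} (hN : 1 ≤ N) (h2 : ∀ k, 2 ^ k ≤ e (N * k)) :
    ∃ s : ℝ, 1 < s ∧ (∀ n, s ^ n ≤ e n) ∧ ∀ r > s, ∀ᶠ n in atTop, (e n : ℝ) ≤ r ^ n := by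
  have hpos : ∀ n, (0 : ℝ) < e n := fun n => by exact_mod_cast h1 n
  set u : ℕ → ℝ := fun n => Real.log (e n) with hu
  have hS : Subadditive u := fun m n => by
    simp only [hu]
    rw [← Real.log_mul (hpos m).ne' (hpos n).ne']
    exact Real.log_le_log (hpos _) (by exact_mod_cast hsub m n)
  have hb : BddBelow (range fun n => u n / n) := ⟨0, by
    rintro _ ⟨n, rfl⟩
    exact div_nonneg (Real.log_nonneg (by exact_mod_cast h1 n)) (Nat.cast_nonneg n)⟩
  have hlim := hS.tendsto_lim hb
  have hL : 0 < hS.lim := by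
    have hle : Real.log 2 / N ≤ hS.lim := by
      have hsq : Tendsto (fun k : ℕ => N * k) atTop atTop :=
        tendsto_id.const_mul_atTop' (by omega)
      refine ge_of_tendsto (hlim.comp hsq) (eventually_atTop.2 ⟨1, fun k hk => ?_⟩)
      have hk' : (0 : ℝ) < k := by exact_mod_cast hk
      have hN' : (0 : ℝ) < N := by exact_mod_cast hN
      have : (k : ℝ) * Real.log 2 ≤ u (N * k) := by
        rw [← Real.log_pow]
        exact Real.log_le_log (by positivity) (by exact_mod_cast h2 k)
      simp only [Function.comp, Nat.cast_mul]
      rw [div_le_div_iff₀ hN' (by positivity)]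
      nlinarith
    exact lt_of_lt_of_le (div_pos (Real.log_pos (by norm_num)) (by exact_mod_cast hN)) hle
  refine ⟨Real.exp hS.lim, Real.one_lt_exp_iff.2 hL, fun n => ?_, fun r hr => ?_⟩
  · rcases Nat.eq_zero_or_pos n with rfl | hn
    · simpa using h1 0
    · have := hS.lim_le_div hb hn.ne'
      rw [le_div_iff₀ (by exact_mod_cast hn)] at this
      rw [← Real.exp_nat_mul, ← Real.le_log_iff_exp_le (hpos n)]
      linarith
  · have hr0 : 0 < r := (Real.exp_pos _).trans hr
    have hlt : hS.lim < Real.log r := (Real.lt_log_iff_exp_lt hr0).2 hr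
    filter_upwards [hlim.eventually (gt_mem_nhds hlt), eventually_ge_atTop 1] with n hn hn1
    rw [div_lt_iff₀ (by exact_mod_cast hn1)] at hn
    rw [← Real.log_le_log_iff (hpos n) (by positivity), Real.log_pow]
    simp only [hu] at hn
    linarith

/-- Properties at its radius of convergence `s⁻¹` of the power series `∑ a k * t ^ k`, where `a k`
counts the points reaching the cut set at time `k`: the series diverges there, because otherwise
`d n * s⁻¹ ^ n`, bounded by the Cauchy product with a geometric series, would tend to `0`. -/
lemma series_facts {a d : ℕ → ℕ} {c : ℕ} {s : ℝ} (hs : 1 < s)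
    (hlow : ∀ n, s ^ n ≤ (2 * d n + 1 : ℕ))
    (hup : ∀ r > s, ∀ᶠ n in atTop, ((2 * d n + 1 : ℕ) : ℝ) ≤ r ^ n)
    (hac : ∀ n, a n ≤ (2 * d n + 1) * c) (hda : ∀ n, d n ≤ ∑ k ∈ Finset.range n, a k) :
    (∀ t, 0 < t → t < s⁻¹ → Summable fun k => (a k : ℝ) * t ^ k) ∧
      Tendsto (fun t : ℝ => ∑' k, (a k : ℝ) * t ^ k) (nhdsWithin s⁻¹ (Iio s⁻¹)) atTop := by
  have hs0 : 0 < s := by linarith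
  have hsum : ∀ t, 0 < t → t < s⁻¹ → Summable fun k => (a k : ℝ) * t ^ k := by
    intro t ht hts
    obtain ⟨r, hr1, hr2⟩ := exists_between ((lt_inv_comm₀ ht hs0).1 hts)
    have hr0 : 0 < r := hs0.trans hr1
    have hrt : r * t < 1 := by
      rwa [lt_inv_comm₀ hr0 ht, ← one_div, lt_div_iff₀ hr0, mul_comm] at hr2
    have hg : Summable fun k : ℕ => (c : ℝ) * (r * t) ^ k :=
      (summable_geometric_of_lt_one (by positivity) hrt).mul_left _
    refine Summable.of_norm_bounded_eventually_nat hg ?_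
    filter_upwards [hup r hr1] with n hn
    rw [Real.norm_of_nonneg (by positivity), mul_pow, ← mul_assoc]
    refine mul_le_mul_of_nonneg_right ?_ (by positivity)
    calc (a n : ℝ) ≤ ((2 * d n + 1 : ℕ) : ℝ) * c := by exact_mod_cast hac n
      _ ≤ r ^ n * c := by gcongr
      _ = c * r ^ n := mul_comm _ _
  refine ⟨hsum, ?_⟩
  have hinv0 : 0 < s⁻¹ := by positivity
  have hinv1 : s⁻¹ < 1 := inv_lt_one_of_one_lt₀ hs
  have hdiv : ¬ Summable fun k => (a k : ℝ) * s⁻¹ ^ k := by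
    intro hS
    have hgeo : Summable fun k : ℕ => s⁻¹ ^ k := summable_geometric_of_lt_one hinv0.le hinv1
    have hprod := (summable_norm_sum_mul_range_of_summable_norm hS.norm hgeo.norm).of_norm
    have hto := hprod.tendsto_atTop_zero
    have hle : ∀ n, (d (n + 1) : ℝ) * s⁻¹ ^ n ≤
        ∑ k ∈ Finset.range (n + 1), (a k : ℝ) * s⁻¹ ^ k * s⁻¹ ^ (n - k) := by
      intro n
      have : (d (n + 1) : ℝ) ≤ ∑ k ∈ Finset.range (n + 1), (a k : ℝ) := by
        exact_mod_cast hda (n + 1)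
      refine (mul_le_mul_of_nonneg_right this (by positivity)).trans (le_of_eq ?_)
      rw [Finset.sum_mul]
      refine Finset.sum_congr rfl fun k hk => ?_
      rw [mul_assoc, ← pow_add, Nat.add_sub_cancel' (by simpa [Nat.lt_succ_iff] using hk)]
    have hge : ∀ n, s ≤ 2 * (∑ k ∈ Finset.range (n + 1), (a k : ℝ) * s⁻¹ ^ k * s⁻¹ ^ (n - k))
        + s⁻¹ ^ n := by
      intro n
      have h1 := hlow (n + 1)
      push_cast at h1
      have h2 : s ^ (n + 1) * s⁻¹ ^ n = s := by
        rw [pow_succ, mul_right_comm, ← mul_pow, mul_inv_cancel₀ hs0.ne', one_pow, one_mul]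
      have h3 := mul_le_mul_of_nonneg_right h1 (pow_nonneg hinv0.le n)
      rw [h2] at h3
      nlinarith [hle n]
    have hlim := (hto.const_mul 2).add (tendsto_pow_atTop_nhds_zero_of_lt_one hinv0.le hinv1)
    have := ge_of_tendsto' hlim hge
    linarith
  rw [Filter.tendsto_atTop]
  intro M
  have hpart := (not_summable_iff_tendsto_nat_atTop_of_nonneg
    (fun k => by positivity : ∀ k, 0 ≤ (a k : ℝ) * s⁻¹ ^ k)).1 hdiv
  obtain ⟨K, hK⟩ := (hpart.eventually (eventually_gt_atTop M)).exists
  have hcont : Continuous fun t : ℝ => ∑ k ∈ Finset.range K, (a k : ℝ) * t ^ k := by fun_prop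
  have hev : ∀ᶠ t in nhdsWithin s⁻¹ (Iio s⁻¹), M < ∑ k ∈ Finset.range K, (a k : ℝ) * t ^ k :=
    (hcont.tendsto s⁻¹).mono_left nhdsWithin_le_nhds |>.eventually (lt_mem_nhds hK)
  have hpos : ∀ᶠ t in nhdsWithin s⁻¹ (Iio s⁻¹), (0 : ℝ) < t :=
    mem_nhdsWithin_of_mem_nhds (lt_mem_nhds hinv0)
  filter_upwards [hev, hpos, self_mem_nhdsWithin] with t h1 h2 h3
  exact h1.le.trans ((hsum t h2 h3).sum_le_tsum _ fun k _ => by positivity)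

/-! ### A finitely additive set function with constant Jacobian -/

/-- A finitely additive probability on all subsets of the line that is carried by the unit
interval and has constant Jacobian `s` for `f`. -/
structure IsJacobianContent (f : ℝ → ℝ) (s : ℝ) (Λ : Set ℝ → ℝ) : Prop where
  nonneg : ∀ A, 0 ≤ Λ A
  unit : Λ unitI = 1
  compl : Λ unitIᶜ = 0
  union : ∀ A B, Disjoint A B → Λ (A ∪ B) = Λ A + Λ B
  image_le : ∀ A ⊆ unitI, Λ (f '' A) ≤ s * Λ A
  image_eq : ∀ A ⊆ unitI, InjOn f A → Λ (f '' A) = s * Λ A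

/-- The content is a limit, along an ultrafilter `t ↑ s⁻¹`, of the normalised measures
`∑ n, t ^ n • (counting measure on f^{-n}(C))`.  Applying `f` to a set on which it is injective
shifts the series by one step, that is, divides it by `t` up to its constant term, and this term
disappears in the limit since the total mass diverges. -/
lemma exists_content {f : ℝ → ℝ} {C : Set ℝ} (hex : TopExact f) (hC : IsCut f C)
    (hc : ContinuousOn f unitI) (hm : MapsTo f unitI unitI) :
    ∃ s : ℝ, 1 < s ∧ ∃ Λ, IsJacobianContent f s Λ := by
  obtain ⟨N, hN, hpow⟩ := hex.two_pow_le hC hc hm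
  obtain ⟨s, hs, hlow, hup⟩ := exists_growth (e := lapBound f C) (fun n => by simp [lapBound])
    (hC.lapBound_add_le hc hm) hN hpow
  refine ⟨s, hs, ?_⟩
  have hs0 : 0 < s := by linarith
  obtain ⟨hsum, hdiv⟩ := series_facts (a := fun k => (preI f k C).ncard)
    (d := fun n => (cutSet f C n).ncard) (c := C.ncard) hs hlow hup
    (fun n => hC.ncard_preI_le hc hm n hC.finite) (ncard_cutSet_le_sum f C)
  have hPfin : ∀ n, (preI f n C).Finite := fun n => hC.finite_preI hc hm n hC.finite
  set S : ℝ → ℝ := fun t => ∑' k, ((preI f k C).ncard : ℝ) * t ^ k with hS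
  set ν : ℕ → Set ℝ → ℝ := fun n A => ((A ∩ preI f n C).ncard : ℝ) with hν
  set m : ℝ → Set ℝ → ℝ := fun t A => ∑' n, ν n A * t ^ n with hmdef
  have hν0 : ∀ n A, 0 ≤ ν n A := fun n A => Nat.cast_nonneg _
  have hνle : ∀ n A, ν n A ≤ (preI f n C).ncard := fun n A => by
    simp only [hν]
    exact_mod_cast ncard_le_ncard inter_subset_right (hPfin n)
  have hmsum : ∀ t, 0 < t → t < s⁻¹ → ∀ A, Summable fun n => ν n A * t ^ n := fun t h0 h1 A =>
    (hsum t h0 h1).of_nonneg_of_le (fun n => mul_nonneg (hν0 n A) (by positivity))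
      fun n => mul_le_mul_of_nonneg_right (hνle n A) (by positivity)
  have hm0 : ∀ t, 0 < t → ∀ A, 0 ≤ m t A := fun t h0 A =>
    tsum_nonneg fun n => mul_nonneg (hν0 n A) (by positivity)
  have hmS : ∀ t, 0 < t → t < s⁻¹ → ∀ A, m t A ≤ S t := fun t h0 h1 A =>
    (hmsum t h0 h1 A).tsum_le_tsum
      (fun n => mul_le_mul_of_nonneg_right (hνle n A) (by positivity)) (hsum t h0 h1)
  have hmI : ∀ t, m t unitI = S t := fun t => by
    have : ∀ n, unitI ∩ preI f n C = preI f n C := fun n => inter_eq_right.2 fun x hx => hx.1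
    simp only [hmdef, hν, hS, this]
  have hmc : ∀ t, m t unitIᶜ = 0 := fun t => by
    have : ∀ n, unitIᶜ ∩ preI f n C = ∅ := fun n => by
      ext x; simp only [preI, mem_inter_iff, mem_compl_iff, mem_ofPred_eq, mem_empty_iff_false]
      tauto
    simp [hmdef, hν, this]
  have hmU : ∀ t, 0 < t → t < s⁻¹ → ∀ A B, Disjoint A B → m t (A ∪ B) = m t A + m t B := by
    intro t h0 h1 A B hAB
    simp only [hmdef]
    rw [← (hmsum t h0 h1 A).tsum_add (hmsum t h0 h1 B)]
    congr 1; ext n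
    rw [← add_mul]; congr 1
    simp only [hν, union_inter_distrib_right]
    rw [ncard_union_eq (hAB.mono inter_subset_left inter_subset_left)
      ((hPfin n).subset inter_subset_right) ((hPfin n).subset inter_subset_right)]
    push_cast; rfl
  have himg : ∀ n, ∀ A ⊆ unitI, f '' A ∩ preI f n C = f '' (A ∩ preI f (n + 1) C) := by
    intro n A hA
    ext y
    constructor
    · rintro ⟨⟨x, hx, rfl⟩, hy⟩
      exact ⟨x, ⟨hx, hA hx, by simpa using hy.2⟩, rfl⟩
    · rintro ⟨x, ⟨hx, hy⟩, rfl⟩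
      exact ⟨⟨x, hx, rfl⟩, hm (hA hx), by simpa using hy.2⟩
  have hνimg : ∀ n, ∀ A ⊆ unitI, ν n (f '' A) ≤ ν (n + 1) A := fun n A hA => by
    simp only [hν, himg n A hA]
    exact_mod_cast ncard_image_le ((hPfin (n + 1)).subset inter_subset_right)
  have hνimg' : ∀ n, ∀ A ⊆ unitI, InjOn f A → ν n (f '' A) = ν (n + 1) A := fun n A hA hi => by
    simp only [hν, himg n A hA]
    rw [(hi.mono inter_subset_left).ncard_image]
  have hshift : ∀ t, 0 < t → t < s⁻¹ → ∀ A,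
      m t A = ν 0 A + ∑' n, ν (n + 1) A * t ^ (n + 1) := fun t h0 h1 A => by
    have := (hmsum t h0 h1 A).tsum_eq_zero_add
    simpa using this
  have hmulm : ∀ t A, t * m t A = ∑' n, ν n A * t ^ (n + 1) := fun t A => by
    simp only [hmdef]; rw [← tsum_mul_left]; congr 1; ext n; ring
  have hsumS : ∀ t, 0 < t → t < s⁻¹ → ∀ A, Summable fun n => ν n A * t ^ (n + 1) :=
    fun t h0 h1 A => by
      refine ((hmsum t h0 h1 A).mul_left t).congr fun n => by ring
  have hmle : ∀ t, 0 < t → t < s⁻¹ → ∀ A ⊆ unitI, t * m t (f '' A) ≤ m t A := by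
    intro t h0 h1 A hA
    rw [hmulm, hshift t h0 h1 A]
    have := (hsumS t h0 h1 (f '' A)).tsum_le_tsum
      (fun n => mul_le_mul_of_nonneg_right (hνimg n A hA) (by positivity))
      ((summable_nat_add_iff 1).2 (hmsum t h0 h1 A))
    linarith [hν0 0 A]
  have hmeq : ∀ t, 0 < t → t < s⁻¹ → ∀ A ⊆ unitI, InjOn f A →
      t * m t (f '' A) = m t A - ν 0 A := by
    intro t h0 h1 A hA hi
    rw [hmulm, hshift t h0 h1 A, add_sub_cancel_left]
    congr 1; ext n; rw [hνimg' n A hA hi]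
  have hinv0 : 0 < s⁻¹ := by positivity
  let 𝒰 : Ultrafilter ℝ := Ultrafilter.of (nhdsWithin s⁻¹ (Iio s⁻¹))
  have h𝒰 : (𝒰 : Filter ℝ) ≤ nhdsWithin s⁻¹ (Iio s⁻¹) := Ultrafilter.of_le _
  have hdiv' : Tendsto S 𝒰 atTop := hdiv.mono_left h𝒰
  have hid : Tendsto (fun t : ℝ => t) 𝒰 (nhds s⁻¹) :=
    tendsto_id'.2 (h𝒰.trans nhdsWithin_le_nhds)
  have hgood : ∀ᶠ t in (𝒰 : Filter ℝ), 0 < t ∧ t < s⁻¹ ∧ 0 < S t := by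
    filter_upwards [h𝒰 self_mem_nhdsWithin, hid.eventually (lt_mem_nhds hinv0),
      hdiv'.eventually (eventually_gt_atTop 0)] with t h1 h2 h3
    exact ⟨h2, h1, h3⟩
  have hlim : ∀ A, ∃ l : ℝ, Tendsto (fun t => m t A / S t) 𝒰 (nhds l) := by
    intro A
    have hin : ∀ᶠ t in (𝒰 : Filter ℝ), m t A / S t ∈ Icc (0 : ℝ) 1 := by
      filter_upwards [hgood] with t ⟨h0, h1, h2⟩
      exact ⟨div_nonneg (hm0 t h0 A) h2.le, (div_le_one h2).2 (hmS t h0 h1 A)⟩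
    obtain ⟨l, -, hl⟩ := isCompact_Icc.ultrafilter_le_nhds (𝒰.map fun t => m t A / S t)
      (le_principal_iff.2 hin)
    exact ⟨l, hl⟩
  choose Λ hΛ using hlim
  refine ⟨Λ, ?_, ?_, ?_, ?_, ?_, ?_⟩
  · intro A
    refine ge_of_tendsto (hΛ A) ?_
    filter_upwards [hgood] with t ⟨h0, h1, h2⟩
    exact div_nonneg (hm0 t h0 A) h2.le
  · refine tendsto_nhds_unique (hΛ unitI) (tendsto_const_nhds.congr' ?_)
    filter_upwards [hgood] with t ⟨h0, h1, h2⟩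
    rw [hmI, div_self h2.ne']
  · refine tendsto_nhds_unique (hΛ unitIᶜ) (tendsto_const_nhds.congr' ?_)
    filter_upwards with t
    rw [hmc, zero_div]
  · intro A B hAB
    refine tendsto_nhds_unique (hΛ (A ∪ B)) (((hΛ A).add (hΛ B)).congr' ?_)
    filter_upwards [hgood] with t ⟨h0, h1, h2⟩
    rw [hmU t h0 h1 A B hAB, add_div]
  · intro A hA
    have : s⁻¹ * Λ (f '' A) ≤ Λ A := by
      refine le_of_tendsto_of_tendsto (hid.mul (hΛ (f '' A))) (hΛ A) ?_
      filter_upwards [hgood] with t ⟨h0, h1, h2⟩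
      rw [← mul_div_assoc]
      exact div_le_div_of_nonneg_right (hmle t h0 h1 A hA) h2.le
    rwa [inv_mul_le_iff₀ hs0] at this
  · intro A hA hi
    have h1 : Tendsto (fun t => m t A / S t - ν 0 A / S t) 𝒰 (nhds (Λ A - 0)) :=
      (hΛ A).sub (tendsto_const_nhds.div_atTop hdiv')
    have : s⁻¹ * Λ (f '' A) = Λ A - 0 := by
      refine tendsto_nhds_unique (hid.mul (hΛ (f '' A))) (h1.congr' ?_)
      filter_upwards [hgood] with t ⟨h0, h1, h2⟩
      rw [← mul_div_assoc, hmeq t h0 h1 A hA hi, sub_div]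
    rw [sub_zero] at this
    rw [← this, mul_inv_cancel_left₀ hs0.ne']


namespace IsJacobianContent

variable {f : ℝ → ℝ} {s : ℝ} {Λ : Set ℝ → ℝ}

lemma empty (h : IsJacobianContent f s Λ) : Λ ∅ = 0 := by
  have := h.union ∅ ∅ (disjoint_empty _)
  simp at this
  exact this

lemma mono (h : IsJacobianContent f s Λ) {A B : Set ℝ} (hAB : A ⊆ B) : Λ A ≤ Λ B := by
  have := h.union A (B \ A) disjoint_sdiff_right
  rw [union_sdiff_cancel hAB] at this
  linarith [h.nonneg (B \ A)]

lemma union_le (h : IsJacobianContent f s Λ) (A B : Set ℝ) : Λ (A ∪ B) ≤ Λ A + Λ B := by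
  have := h.union A (B \ A) disjoint_sdiff_right
  rw [union_sdiff_self] at this
  linarith [h.mono (sdiff_subset : B \ A ⊆ B)]

lemma inter_unitI (h : IsJacobianContent f s Λ) (A : Set ℝ) : Λ (A ∩ unitI) = Λ A := by
  refine le_antisymm (h.mono inter_subset_left) ?_
  have h1 : A ⊆ (A ∩ unitI) ∪ unitIᶜ := fun x hx => by
    by_cases hI : x ∈ unitI
    · exact Or.inl ⟨hx, hI⟩
    · exact Or.inr hI
  linarith [h.mono h1, h.union_le (A ∩ unitI) unitIᶜ, h.compl]

lemma le_one (h : IsJacobianContent f s Λ) (A : Set ℝ) : Λ A ≤ 1 := by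
  rw [← h.inter_unitI, ← h.unit]
  exact h.mono inter_subset_right

lemma iterate_le (h : IsJacobianContent f s Λ) (hs : 1 < s) (hm : MapsTo f unitI unitI) (n : ℕ)
    {A : Set ℝ} (hA : A ⊆ unitI) : Λ (f^[n] '' A) ≤ s ^ n * Λ A := by
  induction n with
  | zero => simp
  | succ n ih =>
    rw [Function.iterate_succ', image_comp, pow_succ', mul_assoc]
    exact (h.image_le _ ((hm.iterate n).mono_left hA).image_subset).trans
      (mul_le_mul_of_nonneg_left ih (by linarith))

lemma iterate_eq (h : IsJacobianContent f s Λ) (hm : MapsTo f unitI unitI) (n : ℕ)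
    {A : Set ℝ} (hA : A ⊆ unitI) (hi : InjOn f^[n] A) : Λ (f^[n] '' A) = s ^ n * Λ A := by
  induction n with
  | zero => simp
  | succ n ih =>
    rw [Function.iterate_succ'] at hi
    rw [Function.iterate_succ', image_comp, pow_succ', mul_assoc, ← ih hi.of_comp]
    exact h.image_eq _ ((hm.iterate n).mono_left hA).image_subset hi.image_of_comp

lemma le_inv_pow (h : IsJacobianContent f s Λ) (hs : 1 < s) (hm : MapsTo f unitI unitI) (n : ℕ)
    {A : Set ℝ} (hA : A ⊆ unitI) (hi : InjOn f^[n] A) : Λ A ≤ s⁻¹ ^ n := by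
  have h1 := h.iterate_eq hm n hA hi
  have h2 := h.le_one (f^[n] '' A)
  have h3 : 0 < s ^ n := by positivity
  rw [inv_pow, ← one_div, le_div_iff₀ h3, mul_comm]
  linarith

lemma exists_pow_lt (hs : 1 < s) {ε : ℝ} (hε : 0 < ε) : ∃ n : ℕ, s⁻¹ ^ n < ε :=
  exists_pow_lt_of_lt_one hε (inv_lt_one_of_one_lt₀ hs)

lemma singleton (h : IsJacobianContent f s Λ) (hs : 1 < s) (hm : MapsTo f unitI unitI) (x : ℝ) :
    Λ {x} = 0 := by
  refine le_antisymm ?_ (h.nonneg _)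
  rw [← h.inter_unitI]
  refine le_of_forall_pos_lt_add fun ε hε => ?_
  obtain ⟨n, hn⟩ := exists_pow_lt hs hε
  have := h.le_inv_pow hs hm n (A := {x} ∩ unitI) inter_subset_right
    ((subsingleton_singleton.anti inter_subset_left).injOn _)
  linarith

lemma Iic_sub (h : IsJacobianContent f s Λ) {a b : ℝ} (hab : a ≤ b) :
    Λ (Iic b) - Λ (Iic a) = Λ (Ioc a b) := by
  have := h.union (Iic a) (Ioc a b) (by
    rw [Set.disjoint_left]; intro x hx hx'; exact absurd hx'.1 (not_lt.2 hx))
  rw [Iic_union_Ioc_eq_Iic hab] at this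
  linarith

/-- An open interval without preimages of the cut points up to time `n` has mass at most
`s⁻¹ ^ n`, and points have no mass, so the distribution function has no jumps. -/
lemma continuous_Iic (h : IsJacobianContent f s Λ) (hs : 1 < s) (hm : MapsTo f unitI unitI)
    {C : Set ℝ} (hC : IsCut f C) (hc : ContinuousOn f unitI) :
    Continuous fun x => Λ (Iic x) := by
  rw [Metric.continuous_iff]
  intro x ε hε
  obtain ⟨n, hn⟩ := exists_pow_lt hs hε
  have hfin : (cutSet f C n \ {x}).Finite := (hC.finite_cutSet hc hm n).subset sdiff_subset
  obtain ⟨δ, hδ, hball⟩ := Metric.isOpen_iff.1 hfin.isClosed.isOpen_compl x (by simp)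
  have key : ∀ a b, a < b → Ioo a b ⊆ ball x δ → x ∉ Ioo a b → Λ (Ioc a b) < ε := by
    intro a b hab hsub hx
    have h1 : Λ (Ioo a b) ≤ s⁻¹ ^ n := by
      rw [← h.inter_unitI]
      refine h.le_inv_pow hs hm n inter_subset_right (hC.injOn_iterate hc hm n inter_subset_right
        (ordConnected_Ioo.inter (by unfold unitI; exact ordConnected_Icc)) ?_)
      rw [Set.disjoint_left]
      rintro y ⟨hy, -⟩ hyc
      exact hball (hsub hy) ⟨hyc, fun hyx => hx (by rw [mem_singleton_iff] at hyx; exact hyx ▸ hy)⟩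
    have h2 : Ioc a b ⊆ Ioo a b ∪ {b} := by
      rw [Ioo_union_right hab]
    linarith [h.mono h2, h.union_le (Ioo a b) {b}, h.singleton hs hm b]
  refine ⟨δ, hδ, fun y hy => ?_⟩
  rw [Real.dist_eq] at hy ⊢
  rcases lt_trichotomy x y with hxy | rfl | hxy
  · rw [h.Iic_sub hxy.le, abs_of_nonneg (h.nonneg _)]
    refine key x y hxy (fun z hz => ?_) (by simp)
    rw [abs_of_pos (by linarith)] at hy
    rw [mem_ball, Real.dist_eq, abs_of_pos (by linarith [hz.1])]
    linarith [hz.2]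
  · simpa using hε
  · rw [abs_sub_comm, h.Iic_sub hxy.le, abs_of_nonneg (h.nonneg _)]
    refine key y x hxy (fun z hz => ?_) (by simp)
    rw [abs_of_neg (by linarith)] at hy
    rw [mem_ball, Real.dist_eq, abs_of_neg (by linarith [hz.2])]
    linarith [hz.1]

lemma Iic_of_nonpos (h : IsJacobianContent f s Λ) (hs : 1 < s) (hm : MapsTo f unitI unitI)
    {x : ℝ} (hx : x ≤ 0) : Λ (Iic x) = 0 := by
  refine le_antisymm ?_ (h.nonneg _)
  rw [← h.inter_unitI, ← h.singleton hs hm 0]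
  exact h.mono fun y hy => le_antisymm (le_trans hy.1 hx) hy.2.1

lemma Iic_of_one_le (h : IsJacobianContent f s Λ) {x : ℝ} (hx : 1 ≤ x) : Λ (Iic x) = 1 := by
  rw [← h.inter_unitI, ← h.unit]
  congr 1
  exact inter_eq_right.2 fun y hy => hy.2.trans hx

lemma Ioo_pos (h : IsJacobianContent f s Λ) (hs : 1 < s) (hm : MapsTo f unitI unitI)
    (hex : TopExact f) {a b : ℝ} (hab : a < b) (ha : 0 ≤ a) (hb : b ≤ 1) : 0 < Λ (Ioo a b) := by
  obtain ⟨n, hn⟩ := hex.eventually_image hm hab ha hb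
  have h1 := h.iterate_le hs hm n (A := Ioo a b)
    fun x hx => ⟨ha.trans hx.1.le, hx.2.le.trans hb⟩
  rw [hn n le_rfl, h.unit] at h1
  by_contra h2
  have h3 : Λ (Ioo a b) = 0 := le_antisymm (not_lt.1 h2) (h.nonneg _)
  rw [h3] at h1
  linarith

end IsJacobianContent

/-! ### The measure with constant Jacobian -/

/-- Up to its end points, a bounded interval is a half-open one. -/
lemma ordConnected_sandwich {K : Set ℝ} (hK : K ⊆ unitI) (hKc : K.OrdConnected)
    (hne : K.Nonempty) : sInf K ≤ sSup K ∧ K ⊆ Ioc (sInf K) (sSup K) ∪ {sInf K} ∧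
      Ioc (sInf K) (sSup K) ⊆ K ∪ {sSup K} := by
  have hbb : BddBelow K := ⟨0, fun x hx => (hK hx).1⟩
  have hba : BddAbove K := ⟨1, fun x hx => (hK hx).2⟩
  refine ⟨csInf_le_csSup hne hbb hba, fun x hx => ?_, fun x hx => ?_⟩
  · rcases (csInf_le hbb hx).eq_or_lt with h | h
    · exact Or.inr h.symm
    · exact Or.inl ⟨h, le_csSup hba hx⟩
  · rcases hx.2.eq_or_lt with h | h
    · exact Or.inr h
    · obtain ⟨a, ha, hax⟩ := exists_lt_of_csInf_lt hne hx.1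
      obtain ⟨b, hb, hxb⟩ := exists_lt_of_lt_csSup hne h
      exact Or.inl (hKc.out ha hb ⟨hax.le, hxb.le⟩)

/-- A measure agreeing with the content on intervals has the same constant Jacobian on every
interval where `f` is injective: for such an interval `J`, the intersections `f(J) ∩ Iic y` are
images of intervals, and these sets determine a finite measure. -/
lemma IsJacobianContent.jacobian_piece {f : ℝ → ℝ} {s : ℝ} {Λ : Set ℝ → ℝ}
    (h : IsJacobianContent f s Λ) (hs : 1 < s) (hc : ContinuousOn f unitI)
    (hm : MapsTo f unitI unitI) {μ : Measure ℝ} [IsFiniteMeasure μ]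
    (hμ : ∀ K ⊆ unitI, K.OrdConnected → μ K = ENNReal.ofReal (Λ K))
    {J : Set ℝ} (hJ : J ⊆ unitI) (hJc : J.OrdConnected) (hi : InjOn f J)
    {A : Set ℝ} (hA : MeasurableSet A) (hAJ : A ⊆ J) :
    μ (f '' A) = ENNReal.ofReal s * μ A := by
  have hJm : MeasurableSet J := hJc.measurableSet
  have hcJ : ContinuousOn f J := hc.mono hJ
  have hae : AEMeasurable f (μ.restrict J) := hcJ.aemeasurable hJm
  have himg : ∀ B : Set ℝ, B ⊆ J → MeasurableSet B → MeasurableSet (f '' B) := fun B hB hBm =>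
    hBm.image_of_continuousOn_injOn (hcJ.mono hB) (hi.mono hB)
  have hmeas : μ.restrict (f '' J) = ENNReal.ofReal s • (μ.restrict J).map f := by
    refine Measure.ext_of_Iic _ _ fun y => ?_
    have hKc : (J ∩ f ⁻¹' Iic y).OrdConnected := by
      refine ⟨fun u hu v hv w hw => ?_⟩
      have hsub : Icc u v ⊆ J := hJc.out hu.1 hv.1
      refine ⟨hsub hw, ?_⟩
      have huv : u ≤ v := hw.1.trans hw.2
      have hl : u ∈ Icc u v := left_mem_Icc.2 huv
      have hr : v ∈ Icc u v := right_mem_Icc.2 huv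
      rcases (hcJ.mono hsub).strictMonoOn_of_injOn_Icc' huv (hi.mono hsub) with hmo | han
      · exact (hmo.monotoneOn hw hr hw.2).trans hv.2
      · exact (han.antitoneOn hl hw hw.1).trans hu.2
    have hKI : J ∩ f ⁻¹' Iic y ⊆ unitI := inter_subset_left.trans hJ
    rw [Measure.restrict_apply measurableSet_Iic, Measure.smul_apply, smul_eq_mul,
      Measure.map_apply_of_aemeasurable hae measurableSet_Iic, Measure.restrict_apply' hJm,
      inter_comm (Iic y), inter_comm _ J, ← image_inter_preimage,
      hμ _ (hm.mono_left hKI).image_subset (ordConnected_image hc hKI hKc), hμ _ hKI hKc,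
      h.image_eq _ hKI (hi.mono inter_subset_left), ENNReal.ofReal_mul (by linarith)]
  have h1 : μ.restrict (f '' J) (f '' A) = (ENNReal.ofReal s • (μ.restrict J).map f) (f '' A) := by
    rw [hmeas]
  rw [Measure.restrict_apply (himg A hAJ hA), Measure.smul_apply, smul_eq_mul,
    Measure.map_apply_of_aemeasurable hae (himg A hAJ hA), Measure.restrict_apply' hJm,
    inter_eq_left.2 (image_mono hAJ)] at h1
  rw [h1]
  congr 2
  ext x
  constructor
  · rintro ⟨⟨a, ha, hax⟩, hx⟩
    exact hi (hAJ ha) hx hax ▸ ha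
  · exact fun hx => ⟨mem_image_of_mem f hx, hAJ hx⟩

/-- The measure is the Stieltjes measure of the distribution function `x ↦ Λ (Iic x)`. -/
lemma exists_measure_of_content {f : ℝ → ℝ} {s : ℝ} {Λ : Set ℝ → ℝ} {C : Set ℝ}
    (h : IsJacobianContent f s Λ) (hs : 1 < s) (hex : TopExact f) (hC : IsCut f C)
    (hc : ContinuousOn f unitI) (hm : MapsTo f unitI unitI) {n : ℕ} {J : Fin n → Set ℝ}
    (hJ : ∀ i, (J i).OrdConnected) (hU : (⋃ i, J i) = unitI)
    (hdis : Pairwise (Function.onFun Disjoint J)) (hinj : ∀ i, InjOn f (J i)) :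
    ∃ μ : Measure ℝ, IsProbabilityMeasure μ ∧ μ unitIᶜ = 0 ∧
      (∀ x : ℝ, μ {x} = 0) ∧
      (∀ x ∈ unitI, ∀ r : ℝ, 0 < r → 0 < μ (ballI x r)) ∧
      ∀ A : Set ℝ, MeasurableSet A → A ⊆ unitI → Set.InjOn f A →
        μ (f '' A) = ENNReal.ofReal s * μ A := by
  have hcont := h.continuous_Iic hs hm hC hc
  set F : StieltjesFunction ℝ := ⟨fun x => Λ (Iic x), fun a b hab => h.mono (Iic_subset_Iic.2 hab),
    fun x => hcont.continuousWithinAt⟩ with hF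
  have hFx : ∀ x, F x = Λ (Iic x) := fun x => rfl
  have hbot : Tendsto F atBot (nhds 0) := tendsto_const_nhds.congr' (by
    filter_upwards [eventually_le_atBot 0] with x hx
    exact (h.Iic_of_nonpos hs hm hx).symm)
  have htop : Tendsto F atTop (nhds 1) := tendsto_const_nhds.congr' (by
    filter_upwards [eventually_ge_atTop 1] with x hx
    exact (h.Iic_of_one_le hx).symm)
  have hprob := F.isProbabilityMeasure hbot htop
  have hpt : ∀ x, F.measure {x} = 0 := fun x => by
    have : Function.leftLim F x = F x := hcont.continuousAt.continuousWithinAt.leftLim_eq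
    simp [this]
  have hIoc : ∀ a b, a ≤ b → F.measure (Ioc a b) = ENNReal.ofReal (Λ (Ioc a b)) := fun a b hab => by
    rw [F.measure_Ioc, hFx, hFx, h.Iic_sub hab]
  have hμ : ∀ K ⊆ unitI, K.OrdConnected → F.measure K = ENNReal.ofReal (Λ K) := by
    intro K hK hKc
    rcases K.eq_empty_or_nonempty with rfl | hne
    · simp [h.empty]
    obtain ⟨hle, h1, h2⟩ := ordConnected_sandwich hK hKc hne
    have e1 : Λ K = Λ (Ioc (sInf K) (sSup K)) := by
      refine le_antisymm ?_ ?_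
      · linarith [h.mono h1, h.union_le (Ioc (sInf K) (sSup K)) {sInf K},
          h.singleton hs hm (sInf K)]
      · linarith [h.mono h2, h.union_le K {sSup K}, h.singleton hs hm (sSup K)]
    have e2 : F.measure K = F.measure (Ioc (sInf K) (sSup K)) := by
      refine le_antisymm ?_ ?_
      · refine (measure_mono h1).trans ((measure_union_le _ _).trans ?_)
        rw [hpt, add_zero]
      · refine (measure_mono h2).trans ((measure_union_le _ _).trans ?_)
        rw [hpt, add_zero]
    rw [e1, e2, hIoc _ _ hle]
  have hI : F.measure unitI = 1 := by
    rw [hμ unitI subset_rfl (by unfold unitI; exact ordConnected_Icc), h.unit]; simp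
  refine ⟨F.measure, hprob, ?_, hpt, fun x hx r hr => ?_, fun A hA hAI hAi => ?_⟩
  · exact (prob_compl_eq_zero_iff (by unfold unitI; exact measurableSet_Icc)).2 hI
  · have hab : max 0 (x - r) < min 1 (x + r) := by
      have := hx.1; have := hx.2
      simp only [max_lt_iff, lt_min_iff]
      exact ⟨⟨by linarith, by linarith⟩, by linarith, by linarith⟩
    have hsubI : Ioo (max 0 (x - r)) (min 1 (x + r)) ⊆ unitI := fun y hy =>
      ⟨(le_max_left _ _).trans hy.1.le, hy.2.le.trans (min_le_left _ _)⟩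
    have hsub : Ioo (max 0 (x - r)) (min 1 (x + r)) ⊆ ballI x r := fun y hy => by
      refine ⟨hsubI hy, abs_lt.2 ⟨?_, ?_⟩⟩
      · linarith [hy.2.trans_le (min_le_right _ _)]
      · linarith [(le_max_right _ _).trans_lt hy.1]
    refine lt_of_lt_of_le ?_ (measure_mono hsub)
    rw [hμ _ hsubI ordConnected_Ioo, ENNReal.ofReal_pos]
    exact h.Ioo_pos hs hm hex hab (le_max_left _ _) (min_le_left _ _)
  · have hJI : ∀ i, J i ⊆ unitI := fun i => hU ▸ subset_iUnion J i
    have hAeq : A = ⋃ i, A ∩ J i := by rw [← inter_iUnion, hU, inter_eq_left.2 hAI]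
    have hAm : ∀ i, MeasurableSet (A ∩ J i) := fun i => hA.inter (hJ i).measurableSet
    have hAd : Pairwise (Function.onFun Disjoint fun i => A ∩ J i) := fun i j hij =>
      (hdis hij).mono inter_subset_right inter_subset_right
    have hfd : Pairwise (Function.onFun Disjoint fun i => f '' (A ∩ J i)) := fun i j hij => by
      simp only [Function.onFun]
      rw [Set.disjoint_left]
      rintro _ ⟨a, ha, rfl⟩ ⟨b, hb, hab⟩
      exact Set.disjoint_left.1 (hAd hij) ha (hAi hb.1 ha.1 hab ▸ hb)
    conv_lhs => rw [hAeq, image_iUnion]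
    conv_rhs => rw [hAeq]
    rw [measure_iUnion hAd hAm, measure_iUnion hfd fun i =>
      (hAm i).image_of_continuousOn_injOn (hc.mono (inter_subset_left.trans hAI))
        (hAi.mono inter_subset_left), ← ENNReal.tsum_mul_left]
    exact tsum_congr fun i =>
      h.jacobian_piece hs hc hm hμ (hJI i) (hJ i) (hinj i) (hAm i) inter_subset_right

/-! ### Topological entropy -/

namespace IsJacobianContent

variable {f : ℝ → ℝ} {s : ℝ} {Λ : Set ℝ → ℝ}

lemma abs_Iic_sub (h : IsJacobianContent f s Λ) (a b : ℝ) :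
    |Λ (Iic b) - Λ (Iic a)| = Λ (uIoc a b) := by
  rcases le_total a b with hab | hab
  · rw [h.Iic_sub hab, abs_of_nonneg (h.nonneg _), uIoc_of_le hab]
  · rw [abs_sub_comm, h.Iic_sub hab, abs_of_nonneg (h.nonneg _), uIoc_of_ge hab]

/-- The image of an interval contains the interval between the images of its end points, so in the
coordinate `x ↦ Λ (Iic x)` the map `f` is `s`-Lipschitz. -/
lemma abs_Iic_sub_image_le (h : IsJacobianContent f s Λ) (hs : 1 < s) (hc : ContinuousOn f unitI)
    (hm : MapsTo f unitI unitI) {x y : ℝ} (hx : x ∈ unitI) (hy : y ∈ unitI) :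
    |Λ (Iic (f x)) - Λ (Iic (f y))| ≤ s * |Λ (Iic x) - Λ (Iic y)| := by
  have hsub : uIcc y x ⊆ unitI := by
    unfold unitI at *
    exact ordConnected_Icc.uIcc_subset hy hx
  rw [h.abs_Iic_sub, h.abs_Iic_sub]
  have h1 : uIoc (f y) (f x) ⊆ f '' uIcc y x :=
    uIoc_subset_uIcc.trans (intermediate_value_uIcc (hc.mono hsub))
  have h2 : uIcc y x ⊆ uIoc y x ∪ {min y x} := by
    rw [uIoc, union_comm, ← insert_eq, Ioc_insert_left min_le_max]
    exact subset_rfl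
  have h3 := h.mono h2
  have h4 := h.union_le (uIoc y x) {min y x}
  have h5 := h.singleton hs hm (min y x)
  calc Λ (uIoc (f y) (f x)) ≤ Λ (f '' uIcc y x) := h.mono h1
    _ ≤ s * Λ (uIcc y x) := h.image_le _ hsub
    _ ≤ s * Λ (uIoc y x) := mul_le_mul_of_nonneg_left (by linarith) (by linarith)

lemma abs_Iic_sub_iterate_le (h : IsJacobianContent f s Λ) (hs : 1 < s)
    (hc : ContinuousOn f unitI) (hm : MapsTo f unitI unitI) (k : ℕ) {x y : ℝ} (hx : x ∈ unitI)
    (hy : y ∈ unitI) :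
    |Λ (Iic (f^[k] x)) - Λ (Iic (f^[k] y))| ≤ s ^ k * |Λ (Iic x) - Λ (Iic y)| := by
  induction k with
  | zero => simp
  | succ k ih =>
    rw [Function.iterate_succ_apply', Function.iterate_succ_apply', pow_succ', mul_assoc]
    exact (h.abs_Iic_sub_image_le hs hc hm (iterate_mem_unitI hm k hx)
      (iterate_mem_unitI hm k hy)).trans (mul_le_mul_of_nonneg_left ih (by linarith))

/-- The inverse of the distribution function is uniformly continuous on the unit interval. -/
lemma exists_modulus (h : IsJacobianContent f s Λ) (hs : 1 < s) (hex : TopExact f) {C : Set ℝ}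
    (hC : IsCut f C) (hc : ContinuousOn f unitI) (hm : MapsTo f unitI unitI) {ε : ℝ} :
    0 < ε → ∃ η > 0, ∀ x ∈ unitI, ∀ y ∈ unitI, |Λ (Iic x) - Λ (Iic y)| < η → |x - y| < ε := by
  intro hε
  have hcont := h.continuous_Iic hs hm hC hc
  have hpos : ∀ x ∈ unitI, ∀ y ∈ unitI, x < y → 0 < Λ (Iic y) - Λ (Iic x) := by
    intro x hx y hy hxy
    rw [h.Iic_sub hxy.le]
    exact (h.Ioo_pos hs hm hex hxy hx.1 hy.2).trans_le (h.mono Ioo_subset_Ioc_self)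
  set K : Set (ℝ × ℝ) := (unitI ×ˢ unitI) ∩ {p | ε ≤ |p.1 - p.2|} with hK
  have hKc : IsCompact K := by
    refine IsCompact.inter_right ?_ (isClosed_le continuous_const (by fun_prop))
    unfold unitI
    exact isCompact_Icc.prod isCompact_Icc
  rcases K.eq_empty_or_nonempty with hE | hne
  · refine ⟨1, one_pos, fun x hx y hy _ => ?_⟩
    by_contra hlt
    have : (x, y) ∈ K := ⟨⟨hx, hy⟩, not_lt.1 hlt⟩
    rw [hE] at this
    exact this
  · obtain ⟨p, hp, hmin⟩ := hKc.exists_isMinOn hne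
      (f := fun p : ℝ × ℝ => |Λ (Iic p.1) - Λ (Iic p.2)|)
      (((hcont.comp continuous_fst).sub (hcont.comp continuous_snd)).abs.continuousOn)
    refine ⟨|Λ (Iic p.1) - Λ (Iic p.2)|, ?_, fun x hx y hy hxy => ?_⟩
    · rcases lt_trichotomy p.1 p.2 with hlt | heq | hlt
      · have := hpos _ hp.1.1 _ hp.1.2 hlt
        exact abs_pos.2 (by linarith)
      · have h0 : ε ≤ |p.1 - p.2| := hp.2
        rw [heq] at h0
        simp at h0
        linarith
      · have := hpos _ hp.1.2 _ hp.1.1 hlt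
        exact abs_pos.2 (by linarith)
    · by_contra hlt
      have h1 : (x, y) ∈ K := ⟨⟨hx, hy⟩, not_lt.1 hlt⟩
      exact absurd hxy (not_lt.2 (hmin h1))

/-- In the coordinate given by the distribution function, `f` is `s`-Lipschitz, so roughly `s ^ n`
equally spaced points form an `(n, ε)`-cover. -/
lemma coverEntropy_le (h : IsJacobianContent f s Λ) (hs : 1 < s) (hex : TopExact f) {C : Set ℝ}
    (hC : IsCut f C) (hc : ContinuousOn f unitI) (hm : MapsTo f unitI unitI) :
    Dynamics.coverEntropy f unitI ≤ (Real.log s : EReal) := by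
  classical
  have hcont := h.continuous_Iic hs hm hC hc
  rw [Dynamics.coverEntropy_eq_iSup_basis Metric.uniformity_basis_dist]
  refine iSup₂_le fun ε hε => ?_
  obtain ⟨η, hη, hmod⟩ := h.exists_modulus hs hex hC hc hm hε
  have hs0 : 0 < s := by linarith
  have hlog : ENNReal.log (ENNReal.ofReal s) = (Real.log s : EReal) :=
    ENNReal.log_ofReal_of_pos hs0
  rw [← hlog, ← ExpGrowth.expGrowthSup_pow]
  refine ExpGrowth.expGrowthSup_le_of_eventually_le (b := ENNReal.ofReal (1 / η + 2))
    ENNReal.ofReal_ne_top (Eventually.of_forall fun n => ?_)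
  have hsn : 1 ≤ s ^ n := one_le_pow₀ hs.le
  set M : ℕ := ⌊s ^ n / η⌋₊ + 1 with hM
  have hM0 : (0 : ℝ) < M := by rw [hM]; positivity
  have hMlt : s ^ n / η < M := by rw [hM]; push_cast; exact Nat.lt_floor_add_one _
  have hMle : (M : ℝ) ≤ s ^ n / η + 1 := by
    rw [hM]; push_cast
    linarith [Nat.floor_le (show 0 ≤ s ^ n / η by positivity)]
  have hpt : ∀ j : ℕ, ∃ x ∈ unitI, j ≤ M → Λ (Iic x) = j / M := by
    intro j
    by_cases hj : j ≤ M
    · have hmem : (j / M : ℝ) ∈ Icc (Λ (Iic 0)) (Λ (Iic 1)) := by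
        rw [h.Iic_of_nonpos hs hm le_rfl, h.Iic_of_one_le le_rfl]
        exact ⟨by positivity, (div_le_one hM0).2 (by exact_mod_cast hj)⟩
      obtain ⟨x, hx, hxe⟩ := intermediate_value_Icc zero_le_one hcont.continuousOn hmem
      exact ⟨x, hx, fun _ => hxe⟩
    · exact ⟨0, by simp [unitI], fun h => absurd h hj⟩
  choose p hpI hp using hpt
  have hcov : Dynamics.IsDynCoverOf f unitI {q : ℝ × ℝ | dist q.1 q.2 < ε} n
      (((Finset.range (M + 1)).image p : Finset ℝ) : Set ℝ) := by
    intro x hx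
    have hF0 : 0 ≤ Λ (Iic x) * M := mul_nonneg (h.nonneg _) hM0.le
    have hjM : ⌊Λ (Iic x) * M⌋₊ ≤ M := by
      refine Nat.floor_le_of_le ?_
      have := mul_le_mul_of_nonneg_right (h.le_one (Iic x)) hM0.le
      linarith
    refine ⟨p ⌊Λ (Iic x) * M⌋₊, ?_, ?_⟩
    · simp only [Finset.coe_image, Finset.coe_range]
      exact mem_image_of_mem _ (by simpa [Nat.lt_succ_iff] using hjM)
    · rw [Dynamics.mem_dynEntourage]
      intro k hk
      simp only [mem_ofPred_eq, Real.dist_eq]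
      refine hmod _ (iterate_mem_unitI hm k hx) _ (iterate_mem_unitI hm k (hpI _)) ?_
      refine (h.abs_Iic_sub_iterate_le hs hc hm k hx (hpI _)).trans_lt ?_
      rw [hp _ hjM]
      have h1 : |Λ (Iic x) - ⌊Λ (Iic x) * M⌋₊ / M| ≤ 1 / M := by
        have e : Λ (Iic x) - ⌊Λ (Iic x) * M⌋₊ / M =
            (Λ (Iic x) * M - ⌊Λ (Iic x) * M⌋₊) / M := by field_simp
        rw [e, abs_of_nonneg (div_nonneg (by linarith [Nat.floor_le hF0]) hM0.le)]
        exact div_le_div_of_nonneg_right (by linarith [Nat.lt_floor_add_one (Λ (Iic x) * M)])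
          hM0.le
      have h2 : s ^ k ≤ s ^ n := pow_le_pow_right₀ hs.le hk.le
      calc _ ≤ s ^ n * (1 / M) := mul_le_mul h2 h1 (abs_nonneg _) (by positivity)
        _ < η := by
          rw [mul_one_div, div_lt_iff₀ hM0]
          rwa [div_lt_iff₀ hη, mul_comm] at hMlt
  have hcard : ((Finset.range (M + 1)).image p).card ≤ M + 1 :=
    Finset.card_image_le.trans (by simp)
  have h1 : Dynamics.coverMincard f unitI {q : ℝ × ℝ | dist q.1 q.2 < ε} n ≤ ((M + 1 : ℕ) : ℕ∞) :=
    hcov.coverMincard_le_card.trans (by exact_mod_cast hcard)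
  have h2 : ((Dynamics.coverMincard f unitI {q : ℝ × ℝ | dist q.1 q.2 < ε} n : ℕ∞) : ENNReal) ≤
      ((M + 1 : ℕ) : ENNReal) := by exact_mod_cast ENat.toENNReal_mono h1
  refine h2.trans ?_
  rw [← ENNReal.ofReal_pow hs0.le, ← ENNReal.ofReal_mul (by positivity), ← ENNReal.ofReal_natCast]
  refine ENNReal.ofReal_le_ofReal ?_
  push_cast
  have : s ^ n / η = 1 / η * s ^ n := by ring
  nlinarith

lemma biUnion_le (h : IsJacobianContent f s Λ) (S : Finset ℝ) (A : ℝ → Set ℝ) :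
    Λ (⋃ y ∈ S, A y) ≤ ∑ y ∈ S, Λ (A y) := by
  classical
  induction S using Finset.induction_on with
  | empty => simp [h.empty]
  | insert a S ha ih =>
    rw [Finset.set_biUnion_insert, Finset.sum_insert ha]
    linarith [h.union_le (A a) (⋃ y ∈ S, A y)]

/-- If a ball of radius `ε` contains at most one cut point of `f^N`, a dynamical ball of length `m`
for `f^N` splits at each step into two parts, stretched by the factor `s ^ N`, and a null set. -/
lemma dynBall_le (h : IsJacobianContent f s Λ) (hs : 1 < s) {C : Set ℝ}
    (hC : IsCut f C) (hc : ContinuousOn f unitI) (hm : MapsTo f unitI unitI) (N : ℕ) {ε : ℝ}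
    (hε : ∀ p ∈ cutSet f C N, ∀ q ∈ cutSet f C N, p ≠ q → 2 * ε ≤ |p - q|) (m : ℕ) :
    ∀ A ⊆ unitI, (∀ j < m, ∃ z, f^[N * j] '' A ⊆ ball z ε) → Λ A ≤ (2 * s⁻¹ ^ N) ^ m := by
  induction m with
  | zero => intro A _ _; simpa using h.le_one A
  | succ m ih =>
    intro A hA hball
    obtain ⟨z, hz⟩ := hball 0 (Nat.succ_pos m)
    simp only [mul_zero, Function.iterate_zero, image_id] at hz
    obtain ⟨p, hp⟩ : ∃ p, ∀ q ∈ cutSet f C N, q ∈ ball z ε → q = p := by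
      by_cases hex : ∃ p ∈ cutSet f C N, p ∈ ball z ε
      · obtain ⟨p, hp, hpz⟩ := hex
        refine ⟨p, fun q hq hqz => ?_⟩
        by_contra hne
        have h1 := hε q hq p hp hne
        rw [mem_ball, Real.dist_eq] at hpz hqz
        have h2 := abs_sub_le q z p
        rw [abs_sub_comm z p] at h2
        linarith
      · exact ⟨0, fun q hq hqz => (hex ⟨q, hq, hqz⟩).elim⟩
    have hsN : 0 < s ^ N := by positivity
    -- used for the two half-lines bounded by the only possible cut point `p` in the ball
    have hpart : ∀ T : Set ℝ, T.OrdConnected → p ∉ T →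
        Λ (A ∩ T) ≤ s⁻¹ ^ N * (2 * s⁻¹ ^ N) ^ m := by
      intro T hT hpT
      have hbo : (ball z ε ∩ T ∩ unitI).OrdConnected := by
        rw [Real.ball_eq_Ioo]
        exact (ordConnected_Ioo.inter hT).inter (by unfold unitI; exact ordConnected_Icc)
      have hinj : InjOn f^[N] (A ∩ T) := by
        have hsub : A ∩ T ⊆ ball z ε ∩ T ∩ unitI := fun x hx => ⟨⟨hz hx.1, hx.2⟩, hA hx.1⟩
        refine (hC.injOn_iterate hc hm N inter_subset_right hbo ?_).mono hsub
        rw [Set.disjoint_left]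
        rintro q ⟨⟨hq1, hq2⟩, -⟩ hqD
        exact hpT (hp q hqD hq1 ▸ hq2)
      have hATI : A ∩ T ⊆ unitI := inter_subset_left.trans hA
      have h1 := h.iterate_eq hm N hATI hinj
      have h2 := ih (f^[N] '' (A ∩ T)) ((hm.iterate N).mono_left hATI).image_subset (by
        intro j hj
        obtain ⟨w, hw⟩ := hball (j + 1) (by omega)
        refine ⟨w, ?_⟩
        rw [← image_comp, ← Function.iterate_add, ← Nat.mul_succ]
        exact (image_mono inter_subset_left).trans hw)
      rw [h1] at h2
      rw [inv_pow, inv_mul_eq_div, le_div_iff₀ hsN, mul_comm, ← inv_pow]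
      exact h2
    have hcov : A ⊆ (A ∩ Iio p) ∪ (A ∩ Ioi p) ∪ {p} := fun x hx => by
      rcases lt_trichotomy x p with hlt | heq | hlt
      · exact Or.inl (Or.inl ⟨hx, hlt⟩)
      · exact Or.inr heq
      · exact Or.inl (Or.inr ⟨hx, hlt⟩)
    have h1 := h.mono hcov
    have h2 := h.union_le ((A ∩ Iio p) ∪ (A ∩ Ioi p)) {p}
    have h3 := h.union_le (A ∩ Iio p) (A ∩ Ioi p)
    have h4 := h.singleton hs hm p
    have h5 := hpart (Iio p) ordConnected_Iio (by simp)
    have h6 := hpart (Ioi p) ordConnected_Ioi (by simp)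
    rw [pow_succ]
    linarith

/-- Dynamical balls of length `N * m` have mass at most `(2 * s⁻¹ ^ N) ^ m`, so at least
`(s ^ N / 2) ^ m` of them are needed to cover the unit interval. -/
lemma le_coverEntropy_aux (h : IsJacobianContent f s Λ) (hs : 1 < s) {C : Set ℝ}
    (hC : IsCut f C) (hc : ContinuousOn f unitI) (hm : MapsTo f unitI unitI) {N : ℕ} (hN : 1 ≤ N) :
    ((Real.log s - Real.log 2 / N : ℝ) : EReal) ≤ Dynamics.coverEntropy f unitI := by
  have hs0 : 0 < s := by linarith
  have hfin := hC.finite_cutSet hc hm N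
  obtain ⟨ε, hε0, hε⟩ : ∃ ε > 0, ∀ p ∈ cutSet f C N, ∀ q ∈ cutSet f C N, p ≠ q →
      2 * ε ≤ |p - q| := by
    have : ∀ᶠ ε in nhdsWithin (0 : ℝ) (Ioi 0), ∀ p ∈ cutSet f C N, ∀ q ∈ cutSet f C N, p ≠ q →
        2 * ε ≤ |p - q| := by
      refine (eventually_all_finite hfin).2 fun p _ => (eventually_all_finite hfin).2 fun q _ => ?_
      by_cases hpq : p = q
      · exact Eventually.of_forall fun _ hne => absurd hpq hne
      · have hpos : 0 < |p - q| / 2 := by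
          have := abs_pos.2 (sub_ne_zero.2 hpq)
          positivity
        filter_upwards [Ioo_mem_nhdsGT hpos] with ε hε _
        linarith [hε.2]
    obtain ⟨ε, h1, h2⟩ := (this.and self_mem_nhdsWithin).exists
    exact ⟨ε, h2, h1⟩
  have hU : {q : ℝ × ℝ | dist q.1 q.2 < ε} ∈ uniformity ℝ := Metric.dist_mem_uniformity hε0
  refine le_trans ?_ (Dynamics.coverEntropyEntourage_le_coverEntropy f unitI hU)
  refine Frequently.le_expGrowthSup (Filter.frequently_atTop.2 fun m => ⟨N * m, ?_, ?_⟩)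
  · exact Nat.le_mul_of_pos_left m hN
  have hN0 : (N : ℝ) ≠ 0 := by positivity
  have hexp : EReal.exp (((Real.log s - Real.log 2 / N : ℝ) : EReal) * ((N * m : ℕ) : EReal)) =
      ENNReal.ofReal ((s ^ N / 2) ^ m) := by
    rw [show ((N * m : ℕ) : EReal) = (((N * m : ℕ) : ℝ) : EReal) from rfl, ← EReal.coe_mul,
      EReal.exp_coe]
    congr 1
    have e : (Real.log s - Real.log 2 / N) * ((N * m : ℕ) : ℝ) =
        m * Real.log (s ^ N / 2) := by
      rw [Real.log_div (by positivity) two_ne_zero, Real.log_pow]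
      push_cast
      field_simp
    rw [e, mul_comm, Real.exp_mul, Real.exp_log (by positivity), Real.rpow_natCast]
  rw [hexp]
  by_cases htop : Dynamics.coverMincard f unitI {q : ℝ × ℝ | dist q.1 q.2 < ε} (N * m) = ⊤
  · rw [htop]; simp
  obtain ⟨S, hS, hcard⟩ := (Dynamics.coverMincard_finite_iff f unitI _ _).1 (lt_top_iff_ne_top.2 htop)
  rw [← hcard]
  set A : ℝ → Set ℝ := fun y => {x ∈ unitI | ∀ k < N * m, dist (f^[k] x) (f^[k] y) < ε} with hA
  have hsub : unitI ⊆ ⋃ y ∈ S, A y := by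
    intro x hx
    obtain ⟨y, hy, hxy⟩ := hS hx
    rw [Dynamics.mem_dynEntourage] at hxy
    exact mem_iUnion₂.2 ⟨y, hy, hx, hxy⟩
  have hAle : ∀ y ∈ S, Λ (A y) ≤ (2 * s⁻¹ ^ N) ^ m := fun y _ => by
    refine h.dynBall_le hs hC hc hm N hε m (A y) (fun x hx => hx.1) fun j hj =>
      ⟨f^[N * j] y, ?_⟩
    rintro _ ⟨x, hx, rfl⟩
    exact hx.2 (N * j) (Nat.mul_lt_mul_of_pos_left hj hN)
  have h1 : 1 ≤ S.card * (2 * s⁻¹ ^ N) ^ m := by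
    rw [← h.unit, ← nsmul_eq_mul]
    exact (h.mono hsub).trans ((h.biUnion_le S A).trans (Finset.sum_le_card_nsmul _ _ _ hAle))
  have h2 : (s ^ N / 2) ^ m ≤ S.card := by
    have e : (s ^ N / 2) ^ m * (2 * s⁻¹ ^ N) ^ m = 1 := by
      rw [← mul_pow, inv_pow]
      have : s ^ N / 2 * (2 * (s ^ N)⁻¹) = 1 := by field_simp
      rw [this, one_pow]
    have hpos : 0 < (2 * s⁻¹ ^ N) ^ m := by positivity
    rw [← e] at h1
    exact le_of_mul_le_mul_right h1 hpos
  simp only [ENat.toENNReal_coe]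
  rw [← ENNReal.ofReal_natCast]
  exact ENNReal.ofReal_le_ofReal h2

lemma exp_htop (h : IsJacobianContent f s Λ) (hs : 1 < s) (hex : TopExact f) {C : Set ℝ}
    (hC : IsCut f C) (hc : ContinuousOn f unitI) (hm : MapsTo f unitI unitI) :
    Real.exp (htop f) = s := by
  have hle : (Real.log s : EReal) ≤ Dynamics.coverEntropy f unitI := by
    have hlim : Tendsto (fun N : ℕ => ((Real.log s - Real.log 2 / N : ℝ) : EReal)) atTop
        (nhds ((Real.log s : ℝ) : EReal)) := by
      refine (continuous_coe_real_ereal.tendsto _).comp ?_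
      simpa using tendsto_const_nhds.sub (tendsto_const_div_atTop_nhds_zero_nat (Real.log 2))
    refine le_of_tendsto hlim ?_
    filter_upwards [eventually_ge_atTop 1] with N hN
    exact h.le_coverEntropy_aux hs hC hc hm hN
  have heq := le_antisymm (h.coverEntropy_le hs hex hC hc hm) hle
  rw [htop, heq, EReal.toReal_coe, Real.exp_log (by linarith)]

end IsJacobianContent

/-- **Lemma 2.5** (Parry, Milnor-Thurston, Hofbauer): a topologically exact multimodal
map has a non-atomic Borel probability measure with full support on the unit interval
and constant Jacobian `exp (htop f)`. -/
theorem exists_max_entropy_measure (f : ℝ → ℝ)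
    (hmm : Multimodal f) (hex : TopExact f) :
    ∃ μ : Measure ℝ, IsProbabilityMeasure μ ∧ μ unitIᶜ = 0 ∧
      (∀ x : ℝ, μ {x} = 0) ∧
      (∀ x ∈ unitI, ∀ r : ℝ, 0 < r → 0 < μ (ballI x r)) ∧
      ∀ A : Set ℝ, MeasurableSet A → A ⊆ unitI → Set.InjOn f A →
        μ (f '' A) = ENNReal.ofReal (Real.exp (htop f)) * μ A := by
  obtain ⟨hc, hm, -, n, J, hJ, hU, hdis, hinj⟩ := hmm
  obtain ⟨C, hC⟩ := exists_isCut hJ hU hinj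
  obtain ⟨s, hs, Λ, h⟩ := exists_content hex hC hc hm
  rw [h.exp_htop hs hex hC hc hm]
  exact exists_measure_of_content h hs hex hC hc hm hJ hU hdis hinj

end
end
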